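/- arXiv:1508.03182 — 2 statements merged into one kernel-verified Lean document; each statement's English description precedes it below -/
import Mathlib

section
/- Let (Ω, 𝒜, μ) be a measure space, p ∈ [1,∞), and T a positive C₀-semigroup on L_p(μ) with generator A. If V : Ω → [−∞,0] is a T-admissible absorption rate, then −V is T-admissible, and the set [V = −∞] := {x ∈ Ω : V(x) = −∞} is a local μ-null set. -/
open MeasureTheory Filter Topology ENNReal

noncomputable section

namespace Absorption

variable {E : Type*} [NormedAddCommGroup E] [NormedSpace ℝ E]

/-- A one-parameter semigroup of bounded operators (for nonnegative times). -/
def IsSemigroup (T : ℝ → E →L[ℝ] E) : Prop :=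
  T 0 = ContinuousLinearMap.id ℝ E ∧
    ∀ s t : ℝ, 0 ≤ s → 0 ≤ t → T (s + t) = (T s).comp (T t)

/-- A `C₀`-semigroup: a one-parameter semigroup which is strongly continuous on `[0, ∞)`. -/
def IsC0Semigroup (T : ℝ → E →L[ℝ] E) : Prop :=
  IsSemigroup T ∧ ∀ f : E, ContinuousOn (fun t => T t f) (Set.Ici (0 : ℝ))

/-- `(f, g)` belongs to the graph of the generator of the semigroup `T`. -/
def InGenerator (T : ℝ → E →L[ℝ] E) (f g : E) : Prop :=
  Tendsto (fun t : ℝ => t⁻¹ • (T t f - f)) (𝓝[>] (0 : ℝ)) (𝓝 g)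

variable {Ω : Type*} [MeasurableSpace Ω]

/-- A function into a measurable space is *locally measurable* (w.r.t. `μ`) if on every set of
finite measure it coincides a.e. with a measurable function. -/
def LocallyMeasurable {α : Type*} [MeasurableSpace α] (μ : Measure Ω) (V : Ω → α) : Prop :=
  ∀ B : Set Ω, MeasurableSet B → μ B < ∞ →
    ∃ g : Ω → α, Measurable g ∧ ∀ᵐ ω ∂(μ.restrict B), V ω = g ω

/-- A set is a local `μ`-null set if its intersection with every measurable set of finite
measure is null. -/
def IsLocalNullSet (μ : Measure Ω) (N : Set Ω) : Prop :=
  ∀ B : Set Ω, MeasurableSet B → μ B < ∞ → μ (N ∩ B) = 0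

/-- Positivity of a family of operators on `L_p` (for positive times). -/
def IsPositiveSG {p : ℝ≥0∞} {μ : Measure Ω} [Fact (1 ≤ p)]
    (T : ℝ → Lp ℝ p μ →L[ℝ] Lp ℝ p μ) : Prop :=
  ∀ t : ℝ, 0 ≤ t → ∀ f : Lp ℝ p μ, 0 ≤ f → 0 ≤ T t f

/-- A band projection on the Banach lattice `L_p(μ)`: an idempotent operator `P`
with `0 ≤ P f ≤ f` for all `f ≥ 0`. -/
def IsBandProjection {p : ℝ≥0∞} {μ : Measure Ω} [Fact (1 ≤ p)]
    (P : Lp ℝ p μ →L[ℝ] Lp ℝ p μ) : Prop :=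
  P.comp P = P ∧ ∀ f : Lp ℝ p μ, 0 ≤ f → 0 ≤ P f ∧ P f ≤ f

/-- `S = (e^{t(A−W)})_{t ≥ 0}`: `S` is the `C₀`-semigroup whose generator is `A - W`,
where `A` is the generator of `T` and the bounded function `W` acts by multiplication. -/
def IsPerturbedSG (μ : Measure Ω) (p : ℝ≥0∞) [Fact (1 ≤ p)]
    (T S : ℝ → Lp ℝ p μ →L[ℝ] Lp ℝ p μ) (W : Ω → ℝ) : Prop :=
  IsC0Semigroup S ∧
    ∀ f g : Lp ℝ p μ, InGenerator S f g ↔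
      ∃ g₀ : Lp ℝ p μ, InGenerator T f g₀ ∧
        ⇑g =ᵐ[μ] fun ω => g₀ ω - W ω * f ω

/-- Same as `IsPerturbedSG`, for semigroups acting on a subspace `F` of `L_p(μ)`. -/
def IsPerturbedSGSub (μ : Measure Ω) (p : ℝ≥0∞) [Fact (1 ≤ p)] (F : Submodule ℝ (Lp ℝ p μ))
    (T S : ℝ → F →L[ℝ] F) (W : Ω → ℝ) : Prop :=
  IsC0Semigroup S ∧
    ∀ f g : F, InGenerator S f g ↔
      ∃ g₀ : F, InGenerator T f g₀ ∧
        ⇑(g : Lp ℝ p μ) =ᵐ[μ] fun ω => (g₀ : Lp ℝ p μ) ω - W ω * (f : Lp ℝ p μ) ω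

/-- The truncation `V ∧ n` of `V : Ω → [0,∞]`, as a real-valued function. -/
def trunc (V : Ω → ℝ≥0∞) (n : ℕ) : Ω → ℝ := fun ω => (min (V ω) (n : ℝ≥0∞)).toReal

/-- The scalar multiple `ε V` of an absorption rate `V : Ω → [0,∞]`. -/
def smulRate (ε : ℝ) (V : Ω → ℝ≥0∞) : Ω → ℝ≥0∞ := fun ω => ENNReal.ofReal ε * V ω

/-- The absorption rate `V - V ∧ n` (with value `∞` wherever `V = ∞`). -/
def resid (V : Ω → ℝ≥0∞) (n : ℕ) : Ω → ℝ≥0∞ := fun ω => V ω - min (V ω) (n : ℝ≥0∞)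

/-- `TV` is the absorption semigroup `T_V` associated with the rate `V : Ω → [0,∞]`, i.e.
the strong limit `T_V(t) = s-lim_{n→∞} e^{t(A - V∧n)}` (for `t ≥ 0`). -/
def IsAbsorptionSG (μ : Measure Ω) (p : ℝ≥0∞) [Fact (1 ≤ p)]
    (T : ℝ → Lp ℝ p μ →L[ℝ] Lp ℝ p μ) (V : Ω → ℝ≥0∞)
    (TV : ℝ → Lp ℝ p μ →L[ℝ] Lp ℝ p μ) : Prop :=
  ∃ S : ℕ → ℝ → Lp ℝ p μ →L[ℝ] Lp ℝ p μ,
    (∀ n, IsPerturbedSG μ p T (S n) (trunc V n)) ∧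
    ∀ t : ℝ, 0 ≤ t → ∀ f, Tendsto (fun n => S n t f) atTop (𝓝 (TV t f))

/-- `V : Ω → [0,∞]` is `T`-admissible: `V` is locally measurable, the strong limits
`T_V(t) = s-lim_{n→∞} e^{t(A - V∧n)}` exist, and `T_V` is a `C₀`-semigroup. -/
def Admissible (μ : Measure Ω) (p : ℝ≥0∞) [Fact (1 ≤ p)]
    (T : ℝ → Lp ℝ p μ →L[ℝ] Lp ℝ p μ) (V : Ω → ℝ≥0∞) : Prop :=
  LocallyMeasurable μ V ∧
  ∃ TV, IsAbsorptionSG μ p T V TV ∧ IsC0Semigroup TV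

/-- The truncation `(V ∧ n) ∨ (−n)` of an extended-real-valued rate, as a real function. -/
def truncE (V : Ω → EReal) (n : ℕ) : Ω → ℝ :=
  fun ω => (max (min (V ω) (n : EReal)) (-(n : EReal))).toReal

/-- `TV` is the absorption semigroup `T_V` of an extended-real-valued rate `V`:
`T_V(t) = s-lim_{n→∞} e^{t(A - (V∧n)∨(−n))}` (for `t ≥ 0`). -/
def IsAbsorptionSGE (μ : Measure Ω) (p : ℝ≥0∞) [Fact (1 ≤ p)]
    (T : ℝ → Lp ℝ p μ →L[ℝ] Lp ℝ p μ) (V : Ω → EReal)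
    (TV : ℝ → Lp ℝ p μ →L[ℝ] Lp ℝ p μ) : Prop :=
  ∃ S : ℕ → ℝ → Lp ℝ p μ →L[ℝ] Lp ℝ p μ,
    (∀ n, IsPerturbedSG μ p T (S n) (truncE V n)) ∧
    ∀ t : ℝ, 0 ≤ t → ∀ f, Tendsto (fun n => S n t f) atTop (𝓝 (TV t f))

/-- `T`-admissibility for an extended-real-valued absorption rate `V`. -/
def AdmissibleE (μ : Measure Ω) (p : ℝ≥0∞) [Fact (1 ≤ p)]
    (T : ℝ → Lp ℝ p μ →L[ℝ] Lp ℝ p μ) (V : Ω → EReal) : Prop :=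
  LocallyMeasurable μ V ∧
  ∃ TV, IsAbsorptionSGE μ p T V TV ∧ IsC0Semigroup TV

end Absorption


namespace AbsAux

open Absorption

section abstract_part

variable {E : Type*} [NormedAddCommGroup E] [NormedSpace ℝ E]

lemma ext_cont {T : ℝ → E →L[ℝ] E} (hT : IsC0Semigroup T) (f : E) :
    Continuous (fun t => T (max t 0) f) :=
  (hT.2 f).comp_continuous (by fun_prop) (fun x => le_max_right x 0)

lemma loc_bound [CompleteSpace E] {T : ℝ → E →L[ℝ] E} (hT : IsC0Semigroup T) (a : ℝ) :
    ∃ M : ℝ, 0 ≤ M ∧ ∀ t ≤ a, ‖T (max t 0)‖ ≤ M := by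
  obtain ⟨C, hC⟩ := banach_steinhaus (g := fun t : Set.Icc (0 : ℝ) (max a 0) => T (max t.1 0)) (by
    intro x
    obtain ⟨C, hC⟩ := (isCompact_Icc (a := (0 : ℝ)) (b := max a 0)).exists_bound_of_continuousOn
      (ext_cont hT x).continuousOn
    exact ⟨C, fun i => hC i.1 i.2⟩)
  refine ⟨max C 0, le_max_right _ _, fun t ht => le_trans ?_ (le_max_left _ _)⟩
  have := hC ⟨max t 0, le_max_right _ _, max_le_max_right 0 ht⟩
  simpa using this

lemma joint_cont [CompleteSpace E] {T : ℝ → E →L[ℝ] E} (hT : IsC0Semigroup T) :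
    Continuous (fun q : ℝ × E => T (max q.1 0) q.2) := by
  rw [continuous_iff_continuousAt]
  rintro ⟨t, x⟩
  obtain ⟨M, hM0, hM⟩ := loc_bound hT (t + 1)
  have h1 : Tendsto (fun q : ℝ × E => T (max q.1 0) (q.2 - x)) (𝓝 (t, x)) (𝓝 0) := by
    have h2 : Tendsto (fun q : ℝ × E => M * ‖q.2 - x‖) (𝓝 (t, x)) (𝓝 0) := by
      have : Continuous (fun q : ℝ × E => M * ‖q.2 - x‖) := by fun_prop
      simpa using this.tendsto (t, x)
    refine squeeze_zero_norm' ?_ h2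
    have : ∀ᶠ q : ℝ × E in 𝓝 (t, x), q.1 < t + 1 :=
      (continuous_fst.tendsto (t, x)).eventually_lt_const (by simp)
    filter_upwards [this] with q hq
    exact (T (max q.1 0)).le_of_opNorm_le (hM _ hq.le) _
  have h3 : Tendsto (fun q : ℝ × E => T (max q.1 0) x) (𝓝 (t, x)) (𝓝 (T (max t 0) x)) :=
    ((ext_cont hT x).comp continuous_fst).tendsto (t, x)
  have := h1.add h3
  simpa [ContinuousAt] using this

lemma avg_tendsto [CompleteSpace E] {φ : ℝ → ℝ → E} (hφ : Continuous (Function.uncurry φ)) :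
    Tendsto (fun t : ℝ => t⁻¹ • ∫ s in (0 : ℝ)..t, φ t s) (𝓝[>] (0 : ℝ)) (𝓝 (φ 0 0)) := by
  have h1 : Continuous (fun t : ℝ => ∫ r in (0 : ℝ)..1, φ t (t * r)) := by
    apply intervalIntegral.continuous_parametric_intervalIntegral_of_continuous'
    exact hφ.comp (f := fun q : ℝ × ℝ => (q.1, q.1 * q.2)) (by fun_prop)
  have h2 := (h1.tendsto 0).mono_left (nhdsWithin_le_nhds (s := Set.Ioi (0 : ℝ)))
  simp only [zero_mul, intervalIntegral.integral_const, sub_zero, one_smul] at h2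
  refine h2.congr' ?_
  filter_upwards [self_mem_nhdsWithin] with t ht
  have ht0 : t ≠ 0 := ne_of_gt ht
  rw [intervalIntegral.integral_comp_mul_left (fun s => φ t s) ht0]
  simp

/-- Volterra operator. -/
def K (T : ℝ → E →L[ℝ] E) (B : E →L[ℝ] E) (u : ℝ → E) (t : ℝ) : E :=
  ∫ s in (0 : ℝ)..t, T (max (t - s) 0) (B (u s))

variable [CompleteSpace E] {T : ℝ → E →L[ℝ] E} (hT : IsC0Semigroup T) (B : E →L[ℝ] E)

include hT in
lemma K_integrand_cont {u : ℝ → E} (hu : Continuous u) :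
    Continuous (Function.uncurry fun t s : ℝ => T (max (t - s) 0) (B (u s))) :=
  (joint_cont hT).comp (f := fun q : ℝ × ℝ => (q.1 - q.2, B (u q.2))) (by fun_prop)

include hT in
lemma K_integrand_cont' {u : ℝ → E} (hu : Continuous u) (t : ℝ) :
    Continuous (fun s : ℝ => T (max (t - s) 0) (B (u s))) :=
  (joint_cont hT).comp (f := fun s : ℝ => (t - s, B (u s))) (by fun_prop)

include hT in
lemma K_cont {u : ℝ → E} (hu : Continuous u) : Continuous (K T B u) :=
  intervalIntegral.continuous_parametric_intervalIntegral_of_continuous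
    (K_integrand_cont hT B hu) continuous_id

include hT in
lemma K_deriv {u : ℝ → E} (hu : Continuous u) :
    Tendsto (fun t : ℝ => t⁻¹ • K T B u t) (𝓝[>] (0 : ℝ)) (𝓝 (B (u 0))) := by
  have := avg_tendsto (K_integrand_cont hT B hu)
  simpa [K, hT.1.1] using this

omit [CompleteSpace E] in
lemma K_bound {a M C : ℝ} (hM0 : 0 ≤ M) (hM : ∀ t ≤ a, ‖T (max t 0)‖ ≤ M) (k : ℕ)
    {u : ℝ → E} (h : ∀ s, 0 ≤ s → s ≤ a → ‖u s‖ ≤ C * (M * ‖B‖ * s) ^ k / k.factorial)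
    (t : ℝ) (ht0 : 0 ≤ t) (hta : t ≤ a) :
    ‖K T B u t‖ ≤ C * (M * ‖B‖ * t) ^ (k + 1) / (k + 1).factorial := by
  have h1 : ‖K T B u t‖ ≤ ∫ s in (0 : ℝ)..t,
      (C * (M * ‖B‖) ^ (k + 1) / k.factorial) * s ^ k := by
    refine intervalIntegral.norm_integral_le_of_norm_le ht0 ?_
      (Continuous.intervalIntegrable (by fun_prop) _ _)
    refine Eventually.of_forall fun s hs => ?_
    calc ‖T (max (t - s) 0) (B (u s))‖ ≤ M * ‖B (u s)‖ :=
          (T (max (t - s) 0)).le_of_opNorm_le (hM _ (by linarith [hs.1])) _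
      _ ≤ M * (‖B‖ * (C * (M * ‖B‖ * s) ^ k / k.factorial)) := by
          gcongr
          exact (B.le_opNorm _).trans (by gcongr; exact h s hs.1.le (hs.2.trans hta))
      _ = _ := by ring
  refine h1.trans (le_of_eq ?_)
  rw [intervalIntegral.integral_const_mul, integral_pow, Nat.factorial_succ]
  have : (k.factorial : ℝ) ≠ 0 := by positivity
  push_cast
  field_simp
  ring

lemma pow_fact_tendsto (C x : ℝ) :
    Tendsto (fun k : ℕ => C * x ^ k / k.factorial) atTop (𝓝 0) := by
  have := (FloorSemiring.tendsto_pow_div_factorial_atTop x).const_mul C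
  simpa [mul_div_assoc] using this

lemma pow_fact_summable (C x : ℝ) : Summable (fun k : ℕ => C * x ^ k / k.factorial) := by
  have := (Real.summable_pow_div_factorial x).mul_left C
  simpa [mul_div_assoc] using this

include hT in
lemma volterra_unique {u : ℝ → E} (hu : Continuous u) (h : ∀ t, 0 ≤ t → u t = K T B u t)
    (t : ℝ) (ht : 0 ≤ t) : u t = 0 := by
  obtain ⟨M, hM0, hM⟩ := loc_bound hT t
  obtain ⟨C, hC⟩ := (isCompact_Icc (a := (0 : ℝ)) (b := t)).exists_bound_of_continuousOn
      hu.continuousOn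
  have hb : ∀ k : ℕ, ∀ s, 0 ≤ s → s ≤ t → ‖u s‖ ≤ C * (M * ‖B‖ * s) ^ k / k.factorial := by
    intro k
    induction k with
    | zero => intro s h0 h1; simpa using hC s ⟨h0, h1⟩
    | succ k ih =>
      intro s h0 h1
      rw [h s h0]
      exact K_bound B hM0 hM k ih s h0 h1
  have := ge_of_tendsto' (pow_fact_tendsto C (M * ‖B‖ * t)) (fun k => hb k t ht le_rfl)
  simpa using this

/-- Dyson-Phillips terms. -/
def D (T : ℝ → E →L[ℝ] E) (B : E →L[ℝ] E) : ℕ → E → ℝ → E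
  | 0 => fun f t => T (max t 0) f
  | k + 1 => fun f => K T B (D T B k f)

include hT in
lemma D_cont (k : ℕ) (f : E) : Continuous (D T B k f) := by
  induction k with
  | zero => exact ext_cont hT f
  | succ k ih => exact K_cont hT B ih

omit [CompleteSpace E] in
lemma D_bound {a M : ℝ} (hM0 : 0 ≤ M) (hM : ∀ t ≤ a, ‖T (max t 0)‖ ≤ M) (k : ℕ) (f : E) :
    ∀ t, 0 ≤ t → t ≤ a → ‖D T B k f t‖ ≤ (M * ‖f‖) * (M * ‖B‖ * t) ^ k / k.factorial := by
  induction k with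
  | zero =>
    intro t _ hta
    simpa [D] using (T (max t 0)).le_of_opNorm_le (hM t hta) f
  | succ k ih =>
    intro t h0 h1
    exact K_bound B hM0 hM k ih t h0 h1

include hT in
lemma D_add (k : ℕ) (f g : E) (t : ℝ) : D T B k (f + g) t = D T B k f t + D T B k g t := by
  induction k generalizing t with
  | zero => simp [D]
  | succ k ih =>
    simp only [D, K]
    rw [← intervalIntegral.integral_add
      ((K_integrand_cont' hT B (D_cont hT B k f) t).intervalIntegrable _ _)
      ((K_integrand_cont' hT B (D_cont hT B k g) t).intervalIntegrable _ _)]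
    simp [ih]

omit [CompleteSpace E] in
lemma D_smul (k : ℕ) (c : ℝ) (f : E) (t : ℝ) : D T B k (c • f) t = c • D T B k f t := by
  induction k generalizing t with
  | zero => simp [D]
  | succ k ih =>
    simp only [D, K]
    rw [← intervalIntegral.integral_smul]
    simp [ih]

omit [CompleteSpace E] in
lemma D_neg (k : ℕ) (f : E) (t : ℝ) : D T (-B) k f t = (-1 : ℝ) ^ k • D T B k f t := by
  induction k generalizing t with
  | zero => simp [D]
  | succ k ih =>
    simp only [D, K]
    rw [← intervalIntegral.integral_smul]
    simp [ih, pow_succ]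

include hT in
lemma D_summable (f : E) (t : ℝ) (ht : 0 ≤ t) : Summable (fun k => D T B k f t) := by
  obtain ⟨M, hM0, hM⟩ := loc_bound hT t
  exact Summable.of_norm_bounded (pow_fact_summable (M * ‖f‖) (M * ‖B‖ * t))
    (fun k => D_bound B hM0 hM k f t ht le_rfl)

/-- The Dyson-Phillips semigroup. -/
def P (hT : IsC0Semigroup T) (B : E →L[ℝ] E) (t : ℝ) : E →L[ℝ] E :=
  LinearMap.mkContinuousOfExistsBound
    { toFun := fun f => ∑' k, D T B k f (max t 0)
      map_add' := fun f g => by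
        simp_rw [D_add hT]
        exact (D_summable hT B f _ (le_max_right _ _)).tsum_add
          (D_summable hT B g _ (le_max_right _ _))
      map_smul' := fun c f => by
        simp_rw [D_smul]
        exact (D_summable hT B f _ (le_max_right _ _)).tsum_const_smul c }
    (by
      obtain ⟨M, hM0, hM⟩ := loc_bound hT (max t 0)
      refine ⟨∑' k : ℕ, M * (M * ‖B‖ * max t 0) ^ k / k.factorial, fun f => ?_⟩
      have hs := (pow_fact_summable M (M * ‖B‖ * max t 0))
      refine tsum_of_norm_bounded (hs.hasSum.mul_right ‖f‖) (fun k => ?_)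
      refine (D_bound B hM0 hM k f _ (le_max_right _ _) le_rfl).trans (le_of_eq ?_)
      ring)

lemma P_hasSum (f : E) (t : ℝ) (ht : 0 ≤ t) : HasSum (fun k => D T B k f t) (P hT B t f) := by
  have := (D_summable hT B f t ht).hasSum
  have h2 : P hT B t f = ∑' k, D T B k f (max t 0) := rfl
  rw [h2, max_eq_left ht]
  exact this

lemma P_max (f : E) (t : ℝ) : P hT B (max t 0) f = P hT B t f := by
  have h2 : ∀ t, P hT B t f = ∑' k, D T B k f (max t 0) := fun _ => rfl
  rw [h2, h2]; simp

lemma P_cont (f : E) : Continuous (fun t => P hT B t f) := by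
  rw [continuous_iff_continuousAt]
  intro t
  obtain ⟨M, hM0, hM⟩ := loc_bound hT (|t| + 1)
  have h : ContinuousOn (fun t => ∑' k, D T B k f (max t 0)) (Set.Iic (|t| + 1)) := by
    refine continuousOn_tsum (fun k => ?_)
      (pow_fact_summable (M * ‖f‖) (M * ‖B‖ * (|t| + 1))) (fun k s hs => ?_)
    · exact ((D_cont hT B k f).comp (by fun_prop)).continuousOn
    · have h1 : max s 0 ≤ |t| + 1 := max_le hs (by positivity)
      refine (D_bound B hM0 hM k f _ (le_max_right _ _) h1).trans ?_
      gcongr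
  exact h.continuousAt (Iic_mem_nhds (by linarith [le_abs_self t]))

lemma P_volterra (f : E) (t : ℝ) (ht : 0 ≤ t) :
    P hT B t f = T t f + K T B (fun s => P hT B s f) t := by
  have h1 : HasSum (fun k => D T B (k + 1) f t) (K T B (fun s => P hT B s f) t) := by
    obtain ⟨M, hM0, hM⟩ := loc_bound hT t
    refine intervalIntegral.hasSum_integral_of_dominated_convergence
      (bound := fun k _ => M * (‖B‖ * ((M * ‖f‖) * (M * ‖B‖ * t) ^ k / k.factorial))) ?_ ?_ ?_ ?_ ?_
    · intro k
      exact (K_integrand_cont' hT B (D_cont hT B k f) t).aestronglyMeasurable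
    · intro k
      refine Eventually.of_forall fun s hs => ?_
      rw [Set.uIoc_of_le ht] at hs
      have hs0 := hs.1.le
      refine ((T (max (t - s) 0)).le_of_opNorm_le (hM _ (by linarith [hs.1])) _).trans ?_
      gcongr
      refine (B.le_opNorm _).trans ?_
      gcongr
      refine (D_bound B hM0 hM k f s hs.1.le hs.2).trans ?_
      gcongr
      exact hs.2
    · refine Eventually.of_forall fun s hs => ?_
      exact ((pow_fact_summable _ _).mul_left _).mul_left _
    · simp
    · refine Eventually.of_forall fun s hs => ?_
      rw [Set.uIoc_of_le ht] at hs
      exact ((T (max (t - s) 0)).comp B).hasSum (P_hasSum hT B f s hs.1.le)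
  have h2 := (hasSum_nat_add_iff' (f := fun k => D T B k f t) 1).2 (P_hasSum hT B f t ht)
  have h3 := h1.unique h2
  rw [h3]
  simp [D, max_eq_left ht]

lemma P_semigroup (s t : ℝ) (hs : 0 ≤ s) (ht : 0 ≤ t) :
    P hT B (t + s) = (P hT B t).comp (P hT B s) := by
  ext f
  simp only [ContinuousLinearMap.comp_apply]
  rw [← sub_eq_zero]
  refine volterra_unique hT B (u := fun t => P hT B (t + s) f - P hT B t (P hT B s f)) ?_ ?_ t ht
  · exact ((P_cont hT B f).comp (by fun_prop)).sub (P_cont hT B _)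
  intro t ht
  have hc := K_integrand_cont' hT B (P_cont hT B f) (t + s)
  have h1 : K T B (fun r => P hT B r f) (t + s) = T t (K T B (fun r => P hT B r f) s)
      + K T B (fun r => P hT B (r + s) f) t := by
    unfold K
    rw [← intervalIntegral.integral_add_adjacent_intervals (hc.intervalIntegrable 0 s)
      (hc.intervalIntegrable s (t + s))]
    congr 1
    · rw [← ContinuousLinearMap.intervalIntegral_comp_comm _
        ((K_integrand_cont' hT B (P_cont hT B f) s).intervalIntegrable _ _)]
      refine intervalIntegral.integral_congr fun r hr => ?_
      rw [Set.uIcc_of_le hs] at hr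
      rw [max_eq_left (by linarith [hr.2]), max_eq_left (by linarith [hr.2]),
        add_sub_assoc, hT.1.2 t (s - r) ht (by linarith [hr.2])]
      rfl
    · have := intervalIntegral.integral_comp_add_right (a := 0) (b := t)
        (fun r => T (max (t + s - r) 0) (B (P hT B r f))) s
      rw [zero_add] at this
      rw [← this]
      refine intervalIntegral.integral_congr fun r hr => ?_
      simp
  have h2 : K T B (fun r => P hT B (r + s) f - P hT B r (P hT B s f)) t
      = K T B (fun r => P hT B (r + s) f) t - K T B (fun r => P hT B r (P hT B s f)) t := by
    unfold K
    rw [← intervalIntegral.integral_sub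
      ((K_integrand_cont' hT B (u := fun r => P hT B (r + s) f)
        ((P_cont hT B f).comp (by fun_prop)) t).intervalIntegrable _ _)
      ((K_integrand_cont' hT B (P_cont hT B _) t).intervalIntegrable _ _)]
    simp
  rw [h2, P_volterra hT B f (t + s) (by positivity), h1, P_volterra hT B _ t ht,
    hT.1.2 t s ht hs]
  simp only [ContinuousLinearMap.comp_apply]
  have h3 := congrArg (T t) (P_volterra hT B f s hs)
  rw [map_add] at h3
  rw [h3]
  abel

/-- `S` is generated by `A + B`. -/
def Pert (T S : ℝ → E →L[ℝ] E) (B : E →L[ℝ] E) : Prop :=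
  IsC0Semigroup S ∧ ∀ f g, InGenerator S f g ↔ InGenerator T f (g - B f)

lemma P_zero : P hT B 0 = ContinuousLinearMap.id ℝ E := by
  ext f
  have := P_volterra hT B f 0 le_rfl
  simpa [K, hT.1.1] using this

lemma P_pert : Pert T (P hT B) B := by
  refine ⟨⟨⟨P_zero hT B, fun s t hs ht => P_semigroup hT B t s ht hs⟩,
    fun f => (P_cont hT B f).continuousOn⟩, fun f g => ?_⟩
  have hK := K_deriv hT B (P_cont hT B f)
  rw [P_zero] at hK
  simp only [ContinuousLinearMap.id_apply] at hK
  have he : ∀ᶠ t in 𝓝[>] (0 : ℝ), t⁻¹ • (P hT B t f - f)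
      = t⁻¹ • (T t f - f) + t⁻¹ • K T B (fun s => P hT B s f) t := by
    filter_upwards [self_mem_nhdsWithin] with t ht
    rw [P_volterra hT B f t (le_of_lt ht), ← smul_add]
    congr 1; abel
  unfold InGenerator
  rw [tendsto_congr' he]
  constructor
  · intro h; simpa using h.sub hK
  · intro h; simpa using h.add hK

include hT in
lemma gen_dense (f : E) : ∃ x : ℕ → E, Tendsto x atTop (𝓝 f) ∧
    ∀ n, ∃ g, InGenerator T (x n) g := by
  have hc := ext_cont hT f
  have h1 := avg_tendsto (φ := fun _ s => T (max s 0) f) (hc.comp continuous_snd)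
  simp only [max_self, hT.1.1, ContinuousLinearMap.id_apply] at h1
  have hseq : Tendsto (fun n : ℕ => 1 / ((n : ℝ) + 1)) atTop (𝓝[>] 0) :=
    tendsto_nhdsWithin_iff.2 ⟨tendsto_one_div_add_atTop_nhds_zero_nat,
      Eventually.of_forall fun n => by simp only [Set.mem_Ioi]; positivity⟩
  refine ⟨_, h1.comp hseq, fun n => ?_⟩
  set r : ℝ := 1 / ((n : ℝ) + 1) with hr
  have hr0 : 0 < r := by positivity
  refine ⟨r⁻¹ • (T r f - f), ?_⟩
  have h2 := avg_tendsto (φ := fun _ s => T (max (r + s) 0) f) (hc.comp (by fun_prop))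
  simp only [add_zero, max_eq_left hr0.le] at h2
  have h3 := (h2.sub h1).const_smul r⁻¹
  refine h3.congr' ?_
  filter_upwards [self_mem_nhdsWithin] with h hh
  have hh0 : 0 ≤ h := le_of_lt hh
  simp only [Function.comp_apply, ← hr]
  have h4 : T h (∫ s in (0 : ℝ)..r, T (max s 0) f) = ∫ s in h..(r + h), T (max s 0) f := by
    rw [← ContinuousLinearMap.intervalIntegral_comp_comm _ (hc.intervalIntegrable _ _)]
    have := intervalIntegral.integral_comp_add_right (a := 0) (b := r)
        (fun s => T (max s 0) f) h
    rw [zero_add] at this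
    rw [← this]
    refine intervalIntegral.integral_congr fun s hs => ?_
    rw [Set.uIcc_of_le hr0.le] at hs
    rw [max_eq_left hs.1, max_eq_left (by linarith [hs.1]), add_comm s h, hT.1.2 h s hh0 hs.1]
    rfl
  have h5 : ∫ s in (0 : ℝ)..h, T (max (r + s) 0) f = ∫ s in r..(r + h), T (max s 0) f := by
    have := intervalIntegral.integral_comp_add_left (a := 0) (b := h)
        (fun s => T (max s 0) f) r
    simpa using this
  have hi := fun a b => hc.intervalIntegrable (μ := volume) a b
  have h6 := intervalIntegral.integral_add_adjacent_intervals (hi 0 r) (hi r (r + h))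
  have h7 := intervalIntegral.integral_add_adjacent_intervals (hi 0 h) (hi h (r + h))
  rw [map_smul, h4, h5, ← smul_sub, ← smul_sub, smul_comm]
  congr 2
  have h8 := h6.trans h7.symm
  rw [sub_eq_sub_iff_add_eq_add, add_comm, h8, add_comm]

lemma sg_unique {S : ℝ → E →L[ℝ] E} (hT : IsC0Semigroup T) (hS : IsC0Semigroup S)
    (h : ∀ f g, InGenerator T f g ↔ InGenerator S f g) (t : ℝ) (ht : 0 ≤ t) : T t = S t := by
  have key : ∀ f g, InGenerator T f g → T t f = S t f := by
    intro f g hfg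
    have hinv : ∀ s, 0 ≤ s → InGenerator T (T s f) (T s g) := by
      intro s hs
      refine (((T s).continuous.tendsto g).comp hfg).congr' ?_
      filter_upwards [self_mem_nhdsWithin] with r hr
      have hr0 : 0 ≤ r := le_of_lt hr
      have : T s (T r f) = T r (T s f) := by
        have h1 := hT.1.2 s r hs hr0
        rw [add_comm, hT.1.2 r s hr0 hs] at h1
        exact (DFunLike.congr_fun h1 f).symm
      simp [map_sub, this]
    have hcont : Continuous (fun s => S (max (t - s) 0) (T (max s 0) f)) :=
      (joint_cont hS).comp (f := fun s => (t - s, T (max s 0) f))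
        ((by fun_prop : Continuous fun s : ℝ => t - s).prodMk (ext_cont hT f))
    have hder : ∀ s ∈ Set.Ico (0 : ℝ) t,
        HasDerivWithinAt (fun s => S (max (t - s) 0) (T (max s 0) f)) 0 (Set.Ici s) s := by
      intro s hs
      rw [hasDerivWithinAt_iff_tendsto_slope, Set.Ici_sdiff_left]
      have hA := hinv s hs.1
      have hB := (h _ _).1 hA
      have hd := hA.sub hB
      rw [sub_self] at hd
      have hmap : Tendsto (fun r => r - s) (𝓝[>] s) (𝓝[>] 0) := by
        refine tendsto_nhdsWithin_iff.2 ⟨?_, ?_⟩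
        · have : Continuous (fun r : ℝ => r - s) := by fun_prop
          simpa using (this.tendsto s).mono_left nhdsWithin_le_nhds
        · filter_upwards [self_mem_nhdsWithin] with r hr
          have hr' : s < r := hr
          simp only [Set.mem_Ioi]; linarith
      have hd' := hd.comp hmap
      have ht' : Tendsto (fun r => t - r) (𝓝[>] s) (𝓝 (t - s)) := by
        have : Continuous (fun r : ℝ => t - r) := by fun_prop
        exact (this.tendsto s).mono_left nhdsWithin_le_nhds
      have := ((joint_cont hS).tendsto (t - s, 0)).comp (ht'.prodMk_nhds hd')
      simp only [map_zero] at this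
      refine this.congr' ?_
      have hlt : ∀ᶠ r in 𝓝[>] s, r < t :=
        nhdsWithin_le_nhds (Iio_mem_nhds hs.2)
      filter_upwards [self_mem_nhdsWithin, hlt] with r hr hrt
      have hr' : s < r := hr
      have h0 := hs.1
      simp only [Function.comp_apply, slope, vsub_eq_sub]
      rw [max_eq_left (by linarith : 0 ≤ t - r), max_eq_left (by linarith : 0 ≤ t - s),
        max_eq_left (by linarith : 0 ≤ r), max_eq_left h0, ← smul_sub, map_smul]
      congr 1
      have e1 : T r f = T (r - s) (T s f) := by
        have := hT.1.2 (r - s) s (by linarith) h0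
        rw [sub_add_cancel] at this
        rw [this]; rfl
      have e2 : S (t - s) (T s f) = S (t - r) (S (r - s) (T s f)) := by
        have := hS.1.2 (t - r) (r - s) (by linarith) (by linarith)
        rw [sub_add_sub_cancel] at this
        rw [this]; rfl
      rw [e1, e2, sub_sub_sub_cancel_right, map_sub]
    have := constant_of_has_deriv_right_zero hcont.continuousOn hder t ⟨ht, le_rfl⟩
    simpa [max_eq_left ht, hT.1.1, hS.1.1] using this
  ext f
  obtain ⟨x, hx, hg⟩ := gen_dense hT f
  have h1 := ((T t).continuous.tendsto f).comp hx
  have h2 := ((S t).continuous.tendsto f).comp hx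
  refine tendsto_nhds_unique h1 (h2.congr fun n => ?_)
  obtain ⟨g, hg⟩ := hg n
  exact (key _ g hg).symm

lemma Pert.hasSum {S : ℝ → E →L[ℝ] E} (hT : IsC0Semigroup T) {B : E →L[ℝ] E} (h : Pert T S B)
    (f : E) (t : ℝ) (ht : 0 ≤ t) : HasSum (fun k => D T B k f t) (S t f) := by
  have h1 := P_hasSum hT B f t ht
  have h2 := sg_unique (P_pert hT B).1 h.1
    (fun f g => ((P_pert hT B).2 f g).trans (h.2 f g).symm) t ht
  rwa [h2] at h1

omit [CompleteSpace E] in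
lemma Pert.diff {S R : ℝ → E →L[ℝ] E} {B C : E →L[ℝ] E} (h : Pert T S B) (h' : Pert T R C) :
    Pert S R (C - B) := by
  refine ⟨h'.1, fun f g => ?_⟩
  rw [h'.2, h.2]
  have : g - C f = g - (C - B) f - B f := by
    rw [sub_apply]; abel
  rw [this]

omit [CompleteSpace E] in
lemma Pert.trans {S R : ℝ → E →L[ℝ] E} {B C : E →L[ℝ] E} (h : Pert T S B) (h' : Pert S R C) :
    Pert T R (C + B) := by
  refine ⟨h'.1, fun f g => ?_⟩
  rw [h'.2, h.2]
  simp [sub_sub]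

include hT in
omit [CompleteSpace E] in
lemma pert_refl : Pert T T 0 := ⟨hT, fun f g => by simp⟩

include hT in
omit [CompleteSpace E] in
lemma pert_scale (c : ℝ) :
    Pert T (fun t => Real.exp (c * t) • T t) (c • ContinuousLinearMap.id ℝ E) := by
  refine ⟨⟨⟨by simp [hT.1.1], fun s t hs ht => ?_⟩, fun f => ?_⟩, fun f g => ?_⟩
  · ext f
    simp [hT.1.2 s t hs ht, mul_add, Real.exp_add, smul_smul, mul_comm]
  · exact ContinuousOn.smul (by fun_prop) (hT.2 f)
  · have hcont : Tendsto (fun t => T t f) (𝓝[>] (0 : ℝ)) (𝓝 f) := by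
      have := ((hT.2 f) 0 (Set.mem_Ici.2 le_rfl)).mono_left
        (nhdsWithin_mono 0 Set.Ioi_subset_Ici_self)
      simpa [hT.1.1] using this
    have hexp : Tendsto (fun t : ℝ => t⁻¹ * (Real.exp (c * t) - 1)) (𝓝[>] (0 : ℝ)) (𝓝 c) := by
      have h1 : HasDerivAt (fun t : ℝ => Real.exp (c * t)) c 0 := by
        have := ((hasDerivAt_id (0 : ℝ)).const_mul c).exp
        simpa using this
      have := h1.tendsto_slope_zero_right
      simpa using this
    have h2 := hexp.smul hcont
    have he : ∀ t : ℝ, t⁻¹ • ((Real.exp (c * t) • T t) f - f)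
        = t⁻¹ • (T t f - f) + (t⁻¹ * (Real.exp (c * t) - 1)) • T t f := by
      intro t
      simp only [smul_apply]
      module
    unfold InGenerator
    simp_rw [he]
    constructor
    · intro h; simpa using h.sub h2
    · intro h; simpa using h.add h2

end abstract_part

section order_part

variable {E : Type*} [NormedAddCommGroup E] [NormedSpace ℝ E] [CompleteSpace E]
  [Lattice E] [HasSolidNorm E] [IsOrderedAddMonoid E] [IsOrderedModule ℝ E]
  {T : ℝ → E →L[ℝ] E}

/-- positivity of a family -/
def Pos (T : ℝ → E →L[ℝ] E) : Prop := ∀ t : ℝ, 0 ≤ t → ∀ f : E, 0 ≤ f → 0 ≤ T t f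

omit [CompleteSpace E] in
lemma K_nonneg (hpos : Pos T) {B : E →L[ℝ] E} (hB : ∀ f, 0 ≤ f → 0 ≤ B f) {u : ℝ → E}
    (hu : ∀ s, 0 ≤ s → 0 ≤ u s) (t : ℝ) (ht : 0 ≤ t) : 0 ≤ K T B u t := by
  unfold K
  rw [intervalIntegral.integral_of_le ht]
  refine integral_nonneg_of_ae ?_
  refine (ae_restrict_iff' measurableSet_Ioc).2 (Eventually.of_forall fun s hs => ?_)
  exact hpos _ (le_max_right _ _) _ (hB _ (hu s hs.1.le))

omit [CompleteSpace E] in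
lemma D_nonneg (hpos : Pos T) {B : E →L[ℝ] E} (hB : ∀ f, 0 ≤ f → 0 ≤ B f) (k : ℕ) {f : E}
    (hf : 0 ≤ f) (t : ℝ) (ht : 0 ≤ t) : 0 ≤ D T B k f t := by
  induction k generalizing t with
  | zero => exact hpos _ (le_max_right _ _) _ hf
  | succ k ih => exact K_nonneg hpos hB ih t ht

lemma D_le {S : ℝ → E →L[ℝ] E} (hT : IsC0Semigroup T) (hpos : Pos T) {B : E →L[ℝ] E}
    (hB : ∀ f, 0 ≤ f → 0 ≤ B f) (h : Pert T S B) (k : ℕ) {f : E}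
    (hf : 0 ≤ f) (t : ℝ) (ht : 0 ≤ t) : D T B k f t ≤ S t f :=
  le_hasSum (h.hasSum hT f t ht) k (fun j _ => D_nonneg hpos hB j hf t ht)

lemma T_le {S : ℝ → E →L[ℝ] E} (hT : IsC0Semigroup T) (hpos : Pos T) {B : E →L[ℝ] E}
    (hB : ∀ f, 0 ≤ f → 0 ≤ B f) (h : Pert T S B) {f : E}
    (hf : 0 ≤ f) (t : ℝ) (ht : 0 ≤ t) : T t f ≤ S t f := by
  have := D_le hT hpos hB h 0 hf t ht
  simpa [D, max_eq_left ht] using this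

lemma two_T_le {S U : ℝ → E →L[ℝ] E} (hT : IsC0Semigroup T) (hpos : Pos T) {B : E →L[ℝ] E}
    (hB : ∀ f, 0 ≤ f → 0 ≤ B f) (hU : Pert T U B) (hS : Pert T S (-B)) {f : E}
    (hf : 0 ≤ f) (t : ℝ) (ht : 0 ≤ t) : T t f + T t f ≤ U t f + S t f := by
  have h1 := (hU.hasSum hT f t ht).add (hS.hasSum hT f t ht)
  have := le_hasSum h1 0 (fun j _ => by
    have hD := D_nonneg hpos hB j hf t ht
    rw [D_neg]
    rcases neg_one_pow_eq_or ℝ j with h | h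
    · rw [h, one_smul]; exact add_nonneg hD hD
    · rw [h]; simp)
  simpa [D, max_eq_left ht] using this

lemma pos_of_pert {S : ℝ → E →L[ℝ] E} (hT : IsC0Semigroup T) (hpos : Pos T) {B : E →L[ℝ] E}
    (c : ℝ) (hB : ∀ f, 0 ≤ f → 0 ≤ c • f + B f) (h : Pert T S B) : Pos S := by
  intro t ht f hf
  have h1 := h.trans (pert_scale h.1 c)
  have h2 : 0 ≤ Real.exp (c * t) • S t f := by
    have := D_le hT hpos (fun f hf => by simpa using hB f hf) h1 0 hf t ht
    refine le_trans ?_ this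
    exact hpos _ (le_max_right _ _) _ hf
  have h3 := smul_nonneg (Real.exp_pos (-(c * t))).le h2
  rwa [smul_smul, ← Real.exp_add, neg_add_cancel, Real.exp_zero, one_smul] at h3

omit [CompleteSpace E] [IsOrderedModule ℝ E] in
lemma dom_norm {A C : E →L[ℝ] E} (hA : ∀ f, 0 ≤ f → 0 ≤ A f) (hAC : ∀ f, 0 ≤ f → A f ≤ C f)
    (f : E) : ‖A f‖ ≤ ‖C‖ * ‖f‖ := by
  have h1 : |A f| ≤ A |f| := by
    rw [abs_le']
    constructor
    · rw [← sub_nonneg, ← map_sub]; exact hA _ (sub_nonneg.2 (le_abs_self f))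
    · rw [← sub_nonneg, sub_neg_eq_add, ← map_add]
      refine hA _ ?_
      have := neg_le_abs f
      rw [← sub_nonneg, sub_neg_eq_add] at this
      exact this
  have h2 : |A f| ≤ C |f| := h1.trans (hAC _ (abs_nonneg f))
  have h3 : ‖A f‖ ≤ ‖C |f|‖ :=
    norm_le_norm_of_abs_le_abs (h2.trans (le_abs_self _))
  refine h3.trans ((C.le_opNorm _).trans (le_of_eq ?_))
  rw [norm_abs_eq_norm]

omit [Lattice E] [HasSolidNorm E] [IsOrderedAddMonoid E] [IsOrderedModule ℝ E] in
lemma c0_of {S : ℝ → E →L[ℝ] E} (hT : IsC0Semigroup T) (hS : IsSemigroup S)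
    (hb : ∀ t, 0 ≤ t → ∀ f, ‖S t f‖ ≤ ‖T t‖ * ‖f‖)
    (h0 : ∀ f, Tendsto (fun t => S t f) (𝓝[>] (0 : ℝ)) (𝓝 f)) : IsC0Semigroup S := by
  refine ⟨hS, fun f t ht => ?_⟩
  have h0' : Tendsto (fun t => S t f - f) (𝓝[≥] (0 : ℝ)) (𝓝 0) := by
    have : Tendsto (fun t => S t f) (𝓝[≥] (0 : ℝ)) (𝓝 f) := by
      rw [← Set.Ioi_insert, nhdsWithin_insert, tendsto_sup]
      refine ⟨?_, h0 f⟩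
      rw [tendsto_pure_left]
      intro s hs
      rw [hS.1]
      exact mem_of_mem_nhds hs
    simpa using this.sub_const f
  obtain ⟨M, hM0, hM⟩ := loc_bound hT (t + 1)
  have habs : Tendsto (fun s : ℝ => |s - t|) (𝓝[≥] t ⊔ 𝓝[Set.Ici 0] t) (𝓝[≥] 0) := by
    refine tendsto_nhdsWithin_iff.2 ⟨?_, Eventually.of_forall fun s => Set.mem_Ici.2 (abs_nonneg _)⟩
    have : Continuous (fun s : ℝ => |s - t|) := by fun_prop
    have := this.tendsto t
    simp only [sub_self, abs_zero] at this
    exact this.mono_left (sup_le nhdsWithin_le_nhds nhdsWithin_le_nhds)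
  have h1 := (h0'.comp (habs.mono_left le_sup_right)).norm.const_mul M
  simp only [norm_zero, mul_zero] at h1
  rw [ContinuousWithinAt, tendsto_iff_norm_sub_tendsto_zero]
  refine squeeze_zero' (Eventually.of_forall fun _ => norm_nonneg _) ?_ h1
  have ht0 : (0 : ℝ) ≤ t := ht
  have key : ∀ a b : ℝ, 0 ≤ a → a ≤ b → a ≤ t + 1 →
      ‖S b f - S a f‖ ≤ M * ‖S (b - a) f - f‖ := by
    intro a b ha hab hat
    have : S b f = S a (S (b - a) f) := by
      have := hS.2 a (b - a) ha (by linarith)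
      rw [add_sub_cancel] at this
      rw [this]; rfl
    rw [this, ← map_sub]
    refine (hb a ha _).trans ?_
    gcongr
    have := hM a hat
    rwa [max_eq_left ha] at this
  have hlt : ∀ᶠ s in 𝓝[Set.Ici 0] t, s < t + 1 :=
    nhdsWithin_le_nhds (Iio_mem_nhds (by linarith))
  filter_upwards [self_mem_nhdsWithin, hlt] with s hs hst
  have hs0 : (0 : ℝ) ≤ s := hs
  simp only [Function.comp_apply]
  rcases le_total s t with h | h
  · rw [abs_of_nonpos (by linarith), neg_sub, norm_sub_rev]
    exact key s t hs0 h hst.le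
  · rw [abs_of_nonneg (by linarith)]
    exact key t s ht0 h (by linarith)

/-- the order-continuity property used below -/
def MonoConv (E : Type*) [NormedAddCommGroup E] [Lattice E] : Prop :=
  ∀ g : ℕ → E, Antitone g → (∀ n, 0 ≤ g n) → ∃ x, Tendsto g atTop (𝓝 x)

omit [CompleteSpace E] [Lattice E] [HasSolidNorm E] [IsOrderedAddMonoid E]
  [IsOrderedModule ℝ E] in
lemma c0_tendsto {S : ℝ → E →L[ℝ] E} (hS : IsC0Semigroup S) (f : E) :
    Tendsto (fun t => S t f) (𝓝[>] (0 : ℝ)) (𝓝 f) := by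
  have := ((hS.2 f) 0 (Set.mem_Ici.2 le_rfl)).mono_left
    (nhdsWithin_mono 0 Set.Ioi_subset_Ici_self)
  simpa [hS.1.1] using this

theorem core (hE : MonoConv E) (hT : IsC0Semigroup T) (hpos : Pos T) (B : ℕ → E →L[ℝ] E)
    (c : ℕ → ℝ) (hB0 : ∀ n f, 0 ≤ f → 0 ≤ B n f) (hBc : ∀ n f, 0 ≤ f → B n f ≤ c n • f)
    (hBm : ∀ n f, 0 ≤ f → B n f ≤ B (n + 1) f)
    (U : ℕ → ℝ → E →L[ℝ] E) (hU : ∀ n, Pert T (U n) (B n)) (UV : ℝ → E →L[ℝ] E)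
    (hUV : ∀ t : ℝ, 0 ≤ t → ∀ f, Tendsto (fun n => U n t f) atTop (𝓝 (UV t f)))
    (hUC : IsC0Semigroup UV) :
    ∃ (S : ℕ → ℝ → E →L[ℝ] E) (SV : ℝ → E →L[ℝ] E), (∀ n, Pert T (S n) (-(B n))) ∧
      (∀ t : ℝ, 0 ≤ t → ∀ f, Tendsto (fun n => S n t f) atTop (𝓝 (SV t f))) ∧
      IsC0Semigroup SV := by
  let S : ℕ → ℝ → E →L[ℝ] E := fun n => P hT (-(B n))
  have hS : ∀ n, Pert T (S n) (-(B n)) := fun n => P_pert hT _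
  have hSpos : ∀ n, Pos (S n) := fun n => pos_of_pert hT hpos (c n)
    (fun f hf => by
      rw [neg_apply, ← sub_eq_add_neg, sub_nonneg]; exact hBc n f hf) (hS n)
  have hSm : ∀ n t f, 0 ≤ t → 0 ≤ f → S (n + 1) t f ≤ S n t f := by
    intro n t f ht hf
    refine T_le (hS (n + 1)).1 (hSpos _) ?_ ((hS (n + 1)).diff (hS n)) hf t ht
    intro f hf
    have := hBm n f hf
    rw [← sub_nonneg] at this
    rw [sub_apply, neg_apply, neg_apply, neg_sub_neg]
    exact this
  have hST : ∀ n t f, 0 ≤ t → 0 ≤ f → S n t f ≤ T t f := by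
    intro n t f ht hf
    refine T_le (hS n).1 (hSpos _) ?_ ((hS n).diff (pert_refl hT)) hf t ht
    intro f hf
    simpa using hB0 n f hf
  have hconv : ∀ t : ℝ, 0 ≤ t → ∀ f, ∃ x, Tendsto (fun n => S n t f) atTop (𝓝 x) := by
    intro t ht f
    have h1 : ∀ f, 0 ≤ f → ∃ x, Tendsto (fun n => S n t f) atTop (𝓝 x) := fun f hf =>
      hE _ (antitone_nat_of_succ_le fun n => hSm n t f ht hf) (fun n => hSpos n t ht f hf)
    obtain ⟨x, hx⟩ := h1 f⁺ (posPart_nonneg f)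
    obtain ⟨y, hy⟩ := h1 f⁻ (negPart_nonneg f)
    refine ⟨x - y, (hx.sub hy).congr fun n => ?_⟩
    rw [← map_sub, posPart_sub_negPart]
  have hex : ∀ t : ℝ, ∃ A : E →L[ℝ] E, 0 ≤ t →
      ∀ f, Tendsto (fun n => S n t f) atTop (𝓝 (A f)) := by
    intro t
    by_cases ht : 0 ≤ t
    · choose x hx using hconv t ht
      exact ⟨continuousLinearMapOfTendsto (fun n => S n t) (tendsto_pi_nhds.2 hx), fun _ => hx⟩
    · exact ⟨0, fun h => absurd h ht⟩
  choose SV hSV using hex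
  refine ⟨S, SV, hS, hSV, ?_⟩
  have hb : ∀ n t, 0 ≤ t → ∀ f, ‖S n t f‖ ≤ ‖T t‖ * ‖f‖ := fun n t ht f =>
    dom_norm (hSpos n t ht) (fun f hf => hST n t f ht hf) f
  refine c0_of hT ⟨?_, ?_⟩ ?_ ?_
  · ext f
    refine tendsto_nhds_unique (hSV 0 le_rfl f) (tendsto_const_nhds.congr fun n => ?_)
    rw [(hS n).1.1.1]
  · intro s t hs ht
    ext f
    refine tendsto_nhds_unique (hSV (s + t) (by positivity) f) ?_
    have h1 : Tendsto (fun n => S n s (S n t f - SV t f)) atTop (𝓝 0) := by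
      have h2 := (((hSV t ht f).sub_const (SV t f)).norm).const_mul ‖T s‖
      simp only [sub_self, norm_zero, mul_zero] at h2
      exact squeeze_zero_norm (fun n => hb n s hs _) h2
    have h3 := h1.add (hSV s hs (SV t f))
    rw [zero_add] at h3
    refine h3.congr fun n => ?_
    rw [(hS n).1.1.2 s t hs ht, map_sub]
    simp
  · intro t ht f
    exact le_of_tendsto' (hSV t ht f).norm (fun n => hb n t ht f)
  · have hp : ∀ f, 0 ≤ f → Tendsto (fun t => SV t f) (𝓝[>] (0 : ℝ)) (𝓝 f) := by
      intro f hf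
      have h1 := c0_tendsto hT f
      have h2 := ((c0_tendsto hUC f).sub h1).norm
      simp only [sub_self, norm_zero] at h2
      have h3 : Tendsto (fun t => T t f - SV t f) (𝓝[>] (0 : ℝ)) (𝓝 0) := by
        refine squeeze_zero_norm' ?_ h2
        filter_upwards [self_mem_nhdsWithin] with t ht
        have ht0 : 0 ≤ t := le_of_lt ht
        have e1 : SV t f ≤ T t f := le_of_tendsto' (hSV t ht0 f) (fun n => hST n t f ht0 hf)
        have e2 : T t f + T t f ≤ UV t f + SV t f :=
          ge_of_tendsto' ((hUV t ht0 f).add (hSV t ht0 f))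
            (fun n => two_T_le hT hpos (hB0 n) (hU n) (hS n) hf t ht0)
        have e3 : T t f - SV t f ≤ UV t f - T t f := by
          rw [sub_le_sub_iff]; exact e2
        refine norm_le_norm_of_abs_le_abs ?_
        rw [abs_of_nonneg (sub_nonneg.2 e1)]
        exact e3.trans (le_abs_self _)
      have := h1.sub h3
      simpa using this
    intro f
    have := (hp f⁺ (posPart_nonneg f)).sub (hp f⁻ (negPart_nonneg f))
    rw [posPart_sub_negPart] at this
    refine this.congr fun t => ?_
    rw [← map_sub, posPart_sub_negPart]

theorem core_null (hT : IsC0Semigroup T) (hpos : Pos T) (B : ℕ → E →L[ℝ] E)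
    (hB0 : ∀ n f, 0 ≤ f → 0 ≤ B n f)
    (U : ℕ → ℝ → E →L[ℝ] E) (hU : ∀ n, Pert T (U n) (B n)) (UV : ℝ → E →L[ℝ] E)
    (hUV : ∀ t : ℝ, 0 ≤ t → ∀ f, Tendsto (fun n => U n t f) atTop (𝓝 (UV t f)))
    (Q : E →L[ℝ] E) (hQ0 : ∀ f, 0 ≤ f → 0 ≤ Q f)
    (hQ : ∀ (n : ℕ) f, 0 ≤ f → (n : ℝ) • Q f ≤ B n f) (f : E) (hf : 0 ≤ f) : Q f = 0 := by
  have hz : ∀ t, 0 ≤ t → D T Q 1 f t = 0 := by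
    intro t ht
    have hD0 : 0 ≤ D T Q 1 f t := D_nonneg hpos hQ0 1 hf t ht
    have h1 : ∀ n : ℕ, (n : ℝ) • D T Q 1 f t ≤ U n t f := by
      intro n
      refine le_trans ?_ (D_le hT hpos (hB0 n) (hU n) 1 hf t ht)
      have h2 : 0 ≤ K T (B n - (n : ℝ) • Q) (D T Q 0 f) t := by
        refine K_nonneg hpos ?_ (fun s hs => hpos _ (le_max_right _ _) _ hf) t ht
        intro g hg
        rw [sub_apply, smul_apply]
        exact sub_nonneg.2 (hQ n g hg)
      have h3 : K T (B n - (n : ℝ) • Q) (D T Q 0 f) t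
          = D T (B n) 1 f t - (n : ℝ) • D T Q 1 f t := by
        simp only [D, K]
        have hc : Continuous fun s : ℝ => (n : ℝ) • T (max (t - s) 0) (Q (T (max s 0) f)) :=
          (K_integrand_cont' hT Q (ext_cont hT f) t).const_smul (n : ℝ)
        rw [← intervalIntegral.integral_smul, ← intervalIntegral.integral_sub
          ((K_integrand_cont' hT (B n) (ext_cont hT f) t).intervalIntegrable _ _)
          (hc.intervalIntegrable _ _)]
        simp
      rw [h3] at h2
      exact sub_nonneg.1 h2
    have h4 : ∀ n : ℕ, (n : ℝ) * ‖D T Q 1 f t‖ ≤ ‖U n t f‖ := by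
      intro n
      have h5 : 0 ≤ (n : ℝ) • D T Q 1 f t := smul_nonneg (Nat.cast_nonneg n) hD0
      have : ‖(n : ℝ) • D T Q 1 f t‖ ≤ ‖U n t f‖ := by
        refine norm_le_norm_of_abs_le_abs ?_
        rw [abs_of_nonneg h5]
        exact (h1 n).trans (le_abs_self _)
      rwa [norm_smul, Real.norm_natCast] at this
    have h6 := tendsto_inv_atTop_nhds_zero_nat (𝕜 := ℝ)
    have h7 := h6.mul (hUV t ht f).norm
    rw [zero_mul] at h7
    have h8 : ‖D T Q 1 f t‖ ≤ 0 := by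
      refine ge_of_tendsto h7 ?_
      filter_upwards [eventually_gt_atTop 0] with n hn
      have hn' : (0 : ℝ) < n := by exact_mod_cast hn
      rw [inv_mul_eq_div, le_div_iff₀ hn', mul_comm]
      exact h4 n
    simpa using h8
  have h9 := K_deriv hT Q (ext_cont hT f)
  simp only [max_self, hT.1.1, ContinuousLinearMap.id_apply] at h9
  refine tendsto_nhds_unique h9 (tendsto_const_nhds.congr' ?_)
  filter_upwards [self_mem_nhdsWithin] with t ht
  have : K T Q (fun s => T (max s 0) f) t = 0 := hz t (le_of_lt ht)
  rw [this, smul_zero]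

end order_part

section lp_part

variable {Ω : Type*} [MeasurableSpace Ω] {μ : Measure Ω} {p : ℝ≥0∞} [Fact (1 ≤ p)]

lemma lm_comp {α β : Type*} [MeasurableSpace α] [MeasurableSpace β] {V : Ω → α}
    (hV : LocallyMeasurable μ V) {τ : α → β} (hτ : Measurable τ) :
    LocallyMeasurable μ (fun ω => τ (V ω)) := by
  intro B hB hμ
  obtain ⟨g, hg, h⟩ := hV B hB hμ
  refine ⟨fun ω => τ (g ω), hτ.comp hg, ?_⟩
  filter_upwards [h] with ω hω
  rw [hω]

omit [Fact (1 ≤ p)] in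
lemma mul_aesm (hp0 : p ≠ 0) (hp : p ≠ ∞) {w : Ω → ℝ} (hw : LocallyMeasurable μ w)
    (f : Lp ℝ p μ) : AEStronglyMeasurable (fun ω => w ω * f ω) μ := by
  obtain ⟨t, ht, hft, hσ⟩ := (Lp.finStronglyMeasurable f hp0 hp).exists_set_sigmaFinite
  have hwt : AEMeasurable w (μ.restrict t) := by
    rw [← Measure.restrict_univ (μ := μ.restrict t), ← iUnion_spanningSets (μ.restrict t),
      aemeasurable_iUnion_iff]
    intro n
    have hm := measurableSet_spanningSets (μ.restrict t) n
    have hlt := measure_spanningSets_lt_top (μ.restrict t) n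
    rw [Measure.restrict_apply hm] at hlt
    obtain ⟨g, hg, h⟩ := hw _ (hm.inter ht) hlt
    rw [Measure.restrict_restrict hm]
    exact ⟨g, hg, h⟩
  have h1 : AEStronglyMeasurable (fun ω => w ω * f ω) (μ.restrict t) :=
    hwt.aestronglyMeasurable.mul (Lp.aestronglyMeasurable f).restrict
  have h2 : (fun ω => w ω * f ω) = t.indicator (fun ω => w ω * f ω) := by
    ext ω
    by_cases h : ω ∈ t
    · simp [h]
    · simp [h, hft ω h]
  rw [h2]
  exact (aestronglyMeasurable_indicator_iff ht).2 h1

lemma mul_exists (hp : p ≠ ∞) {w : Ω → ℝ} (hw : LocallyMeasurable μ w) (C : ℝ)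
    (hC : ∀ ω, |w ω| ≤ C) :
    ∃ B : Lp ℝ p μ →L[ℝ] Lp ℝ p μ, ∀ f : Lp ℝ p μ, ⇑(B f) =ᵐ[μ] fun ω => w ω * f ω := by
  have hp0 : p ≠ 0 := (zero_lt_one.trans_le (Fact.out : 1 ≤ p)).ne'
  have hm : ∀ f : Lp ℝ p μ, MemLp (fun ω => w ω * f ω) p μ := fun f =>
    (Lp.memLp f).of_le_mul (c := C) (mul_aesm hp0 hp hw f) (Eventually.of_forall fun ω => by
      rw [norm_mul, Real.norm_eq_abs]; gcongr; exact hC ω)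
  refine ⟨LinearMap.mkContinuous
    { toFun := fun f => (hm f).toLp _
      map_add' := fun f g => ?_
      map_smul' := fun c f => ?_ } C (fun f => ?_), fun f => ?_⟩
  · apply Lp.ext
    filter_upwards [(hm (f + g)).coeFn_toLp, (hm f).coeFn_toLp, (hm g).coeFn_toLp,
      Lp.coeFn_add f g, Lp.coeFn_add ((hm f).toLp _) ((hm g).toLp _)] with ω h1 h2 h3 h4 h5
    rw [h1, h5, Pi.add_apply, h2, h3, h4, Pi.add_apply]; ring
  · apply Lp.ext
    filter_upwards [(hm (c • f)).coeFn_toLp, (hm f).coeFn_toLp,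
      Lp.coeFn_smul c f, Lp.coeFn_smul c ((hm f).toLp _)] with ω h1 h2 h4 h5
    rw [h1, RingHom.id_apply, h5, Pi.smul_apply, h2, h4, Pi.smul_apply]
    simp only [smul_eq_mul]; ring
  · refine Lp.norm_le_mul_norm_of_ae_le_mul ?_
    filter_upwards [(hm f).coeFn_toLp] with ω h1
    simp only [LinearMap.coe_mk, AddHom.coe_mk]
    rw [h1, norm_mul, Real.norm_eq_abs]; gcongr; exact hC ω
  · exact (hm f).coeFn_toLp

lemma mono_conv (hp : p ≠ ∞) : MonoConv (Lp ℝ p μ) := by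
  intro g hg h0
  have hp1 : 1 ≤ p := Fact.out
  have hp0 : p ≠ 0 := (zero_lt_one.trans_le hp1).ne'
  have hr1 : 1 ≤ p.toReal := by
    rw [← ENNReal.toReal_one]; exact ENNReal.toReal_mono hp hp1
  have hnorm : ∀ f : Lp ℝ p μ, (ENNReal.ofReal (‖f‖ ^ p.toReal)) = ∫⁻ ω, ‖f ω‖ₑ ^ p.toReal ∂μ := by
    intro f
    rw [← ENNReal.ofReal_rpow_of_nonneg (norm_nonneg f) (by linarith), Lp.norm_def,
      ENNReal.ofReal_toReal (Lp.eLpNorm_ne_top f), eLpNorm_eq_lintegral_rpow_enorm_toReal hp0 hp,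
      ← ENNReal.rpow_mul, one_div, inv_mul_cancel₀ (by linarith), ENNReal.rpow_one]
  have key : ∀ m n, m ≤ n → ‖g m - g n‖ ^ p.toReal + ‖g n‖ ^ p.toReal ≤ ‖g m‖ ^ p.toReal := by
    intro m n hmn
    rw [← ENNReal.ofReal_le_ofReal_iff (by positivity),
      ENNReal.ofReal_add (by positivity) (by positivity), hnorm, hnorm, hnorm,
      ← lintegral_add_left' ((Lp.aestronglyMeasurable _).enorm.pow_const _)]
    refine lintegral_mono_ae ?_
    have e1 := (Lp.coeFn_le (g n) (g m)).2 (hg hmn)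
    have e2 := (Lp.coeFn_nonneg (g n)).2 (h0 n)
    filter_upwards [e1, e2, Lp.coeFn_sub (g m) (g n)] with ω h1 h2 h3
    refine (ENNReal.add_rpow_le_rpow_add _ _ hr1).trans (le_of_eq ?_)
    congr 1
    rw [h3, Pi.sub_apply]
    simp only [Pi.zero_apply] at h2
    rw [Real.enorm_of_nonneg (sub_nonneg.2 h1), Real.enorm_of_nonneg h2,
      Real.enorm_of_nonneg (h2.trans h1), ← ENNReal.ofReal_add (sub_nonneg.2 h1) h2, sub_add_cancel]
  have hanti : Antitone (fun n => ‖g n‖ ^ p.toReal) := fun m n hmn => by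
    have := key m n hmn
    have h2 : 0 ≤ ‖g m - g n‖ ^ p.toReal := by positivity
    simp only; linarith
  have hc : CauchySeq (fun n => ‖g n‖ ^ p.toReal) :=
    (tendsto_atTop_ciInf hanti ⟨0, by rintro _ ⟨n, rfl⟩; positivity⟩).cauchySeq
  apply cauchySeq_tendsto_of_complete
  rw [Metric.cauchySeq_iff'] at hc ⊢
  intro ε hε
  obtain ⟨N, hN⟩ := hc (ε ^ p.toReal) (by positivity)
  refine ⟨N, fun n hn => ?_⟩
  have h1 := hN n hn
  rw [Real.dist_eq, abs_lt] at h1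
  have h2 := key N n hn
  rw [dist_comm, dist_eq_norm]
  refine lt_of_not_ge fun h => ?_
  have h3 : ε ^ p.toReal ≤ ‖g N - g n‖ ^ p.toReal := by gcongr
  linarith [h1.1]

lemma pert_iff {T S : ℝ → Lp ℝ p μ →L[ℝ] Lp ℝ p μ} {w : Ω → ℝ}
    {B : Lp ℝ p μ →L[ℝ] Lp ℝ p μ} (hB : ∀ f : Lp ℝ p μ, ⇑(B f) =ᵐ[μ] fun ω => -(w ω) * f ω) :
    IsPerturbedSG μ p T S w ↔ Pert T S B := by
  unfold IsPerturbedSG Pert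
  refine and_congr_right fun _ => forall_congr' fun f => forall_congr' fun g => ?_
  have : (∃ g₀ : Lp ℝ p μ, InGenerator T f g₀ ∧ ⇑g =ᵐ[μ] fun ω => g₀ ω - w ω * f ω) ↔
      InGenerator T f (g - B f) := by
    constructor
    · rintro ⟨g₀, h1, h2⟩
      have : g - B f = g₀ := by
        apply Lp.ext
        filter_upwards [h2, hB f, Lp.coeFn_sub g (B f)] with ω e1 e2 e3
        rw [e3, Pi.sub_apply, e1, e2]; ring
      rwa [this]
    · intro h
      refine ⟨_, h, ?_⟩
      filter_upwards [hB f, Lp.coeFn_sub g (B f)] with ω e2 e3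
      rw [e3, Pi.sub_apply, e2]; ring
  rw [this]

/-- real truncation -/
def tau (n : ℕ) (x : EReal) : ℝ := (max (min x (n : EReal)) (-(n : EReal))).toReal

lemma tau_meas (n : ℕ) : Measurable (tau n) := by
  unfold tau
  exact measurable_ereal_toReal.comp ((measurable_id.min measurable_const).max measurable_const)

lemma tau_coe (n : ℕ) (x : ℝ) : tau n (x : EReal) = max (min x n) (-n) := by
  unfold tau
  have : (max (min (x : EReal) (n : EReal)) (-(n : EReal)))
      = ((max (min x n) (-n) : ℝ) : EReal) := by
    rw [EReal.coe_strictMono.monotone.map_max, EReal.coe_strictMono.monotone.map_min,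
      EReal.coe_neg, EReal.coe_natCast]
  rw [this, EReal.toReal_coe]

lemma neg_le_self_nat (n : ℕ) : -(n : EReal) ≤ (n : EReal) := by
  have : (-(n : ℝ)) ≤ (n : ℝ) := by linarith [Nat.cast_nonneg (α := ℝ) n]
  have h2 : ((-(n : ℝ) : ℝ) : EReal) ≤ ((n : ℝ) : EReal) := EReal.coe_le_coe_iff.2 this
  exact h2

lemma tau_top (n : ℕ) : tau n ⊤ = n := by
  unfold tau
  rw [min_eq_right le_top, max_eq_left (neg_le_self_nat n)]
  rfl

lemma tau_bot (n : ℕ) : tau n ⊥ = -n := by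
  unfold tau
  rw [min_eq_left bot_le, max_eq_right bot_le]
  rfl

lemma tau_neg (n : ℕ) (x : EReal) : tau n (-x) = - tau n x := by
  induction x using EReal.rec with
  | bot => rw [EReal.neg_bot, tau_top, tau_bot, neg_neg]
  | top => rw [EReal.neg_top, tau_top, tau_bot]
  | coe x =>
    have hn : (0 : ℝ) ≤ n := Nat.cast_nonneg n
    rw [← EReal.coe_neg, tau_coe, tau_coe]
    rcases le_total x n with h1 | h1 <;> rcases le_total (-x) n with h2 | h2
    · rw [min_eq_left h1, min_eq_left h2, max_eq_left (by linarith), max_eq_left (by linarith)]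
    · rw [min_eq_left h1, min_eq_right h2, max_eq_left (by linarith), max_eq_right (by linarith)]
      ring
    · rw [min_eq_right h1, min_eq_left h2, max_eq_right (by linarith), max_eq_left (by linarith)]
    · rw [min_eq_right h1, min_eq_right h2, max_eq_left (by linarith)]
      linarith

lemma tau_bounds (n : ℕ) (x : EReal) (hx : 0 ≤ x) :
    0 ≤ tau n x ∧ tau n x ≤ n ∧ tau n x ≤ tau (n + 1) x := by
  have hn : (0 : ℝ) ≤ n := Nat.cast_nonneg n
  induction x using EReal.rec with
  | bot => simp at hx
  | top => rw [tau_top, tau_top]; push_cast; exact ⟨hn, le_rfl, by linarith⟩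
  | coe x =>
    have hx0 : 0 ≤ x := by exact_mod_cast hx
    rw [tau_coe, tau_coe, max_eq_left (by linarith [le_min hx0 hn])]
    refine ⟨le_min hx0 hn, min_le_right _ _, le_max_of_le_left ?_⟩
    push_cast
    exact min_le_min_left _ (by linarith)

omit [Fact (1 ≤ p)] in
lemma lp_smul_nonneg (c : ℝ) (hc : 0 ≤ c) (f : Lp ℝ p μ) (hf : 0 ≤ f) : 0 ≤ c • f := by
  rw [← Lp.coeFn_nonneg] at hf ⊢
  filter_upwards [hf, Lp.coeFn_smul c f] with ω h1 h2
  rw [h2]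
  exact mul_nonneg hc h1

instance : IsOrderedModule ℝ (Lp ℝ p μ) := IsOrderedModule.of_smul_nonneg lp_smul_nonneg

end lp_part

end AbsAux

open Absorption
/-- If `V : Ω → [−∞,0]` is a `T`-admissible absorption rate, then `−V` is
`T`-admissible, and `[V = −∞]` is a local `μ`-null set. -/
theorem statement9
    {Ω : Type*} [MeasurableSpace Ω] (μ : Measure Ω) (p : ℝ≥0∞) [Fact (1 ≤ p)] (hp : p ≠ ∞)
    (T : ℝ → Lp ℝ p μ →L[ℝ] Lp ℝ p μ)
    (hT : IsC0Semigroup T) (hTpos : IsPositiveSG T)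
    (V : Ω → EReal) (hVneg : ∀ ω, V ω ≤ 0)
    (hV : AdmissibleE μ p T V) :
    AdmissibleE μ p T (fun ω => -(V ω)) ∧
    IsLocalNullSet μ {ω | V ω = ⊥} := by
  have hp1 : 1 ≤ p := Fact.out
  have hp0 : p ≠ 0 := (zero_lt_one.trans_le hp1).ne'
  obtain ⟨hVm, UV, ⟨U, hU, hUV⟩, hUC⟩ := hV
  have hW0 : ∀ ω, 0 ≤ -(V ω) := fun ω => by
    have := EReal.neg_le_neg_iff.2 (hVneg ω)
    simpa using this
  have hWm : LocallyMeasurable μ (fun ω => -(V ω)) := AbsAux.lm_comp hVm measurable_neg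
  have hb := fun n ω => AbsAux.tau_bounds n (-(V ω)) (hW0 ω)
  have hex := fun n : ℕ => AbsAux.mul_exists (p := p) hp
    (AbsAux.lm_comp hWm (AbsAux.tau_meas n)) n
    (fun ω => by rw [abs_of_nonneg (hb n ω).1]; exact (hb n ω).2.1)
  choose B hB using hex
  have hB0 : ∀ n f, 0 ≤ f → 0 ≤ B n f := by
    intro n f hf
    rw [← Lp.coeFn_nonneg] at hf ⊢
    filter_upwards [hf, hB n f] with ω h1 h2
    rw [h2]
    exact mul_nonneg (hb n ω).1 h1
  have hBc : ∀ n f, 0 ≤ f → B n f ≤ (n : ℝ) • f := by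
    intro n f hf
    rw [← Lp.coeFn_nonneg] at hf
    rw [← Lp.coeFn_le]
    filter_upwards [hf, hB n f, Lp.coeFn_smul (n : ℝ) f] with ω h1 h2 h3
    rw [h2, h3]
    exact mul_le_mul_of_nonneg_right (hb n ω).2.1 h1
  have hBm : ∀ n f, 0 ≤ f → B n f ≤ B (n + 1) f := by
    intro n f hf
    rw [← Lp.coeFn_nonneg] at hf
    rw [← Lp.coeFn_le]
    filter_upwards [hf, hB n f, hB (n + 1) f] with ω h1 h2 h3
    rw [h2, h3]
    exact mul_le_mul_of_nonneg_right (hb n ω).2.2 h1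
  have hU' : ∀ n, AbsAux.Pert T (U n) (B n) := by
    intro n
    refine (AbsAux.pert_iff ?_).1 (hU n)
    intro f
    filter_upwards [hB n f] with ω h
    rw [h, AbsAux.tau_neg]
    rfl
  refine ⟨⟨hWm, ?_⟩, ?_⟩
  · obtain ⟨S, SV, h1, h2, h3⟩ := AbsAux.core (AbsAux.mono_conv hp) hT hTpos B (fun n => n)
      hB0 hBc hBm U hU' UV hUV hUC
    refine ⟨SV, ⟨S, fun n => ?_, h2⟩, h3⟩
    refine (AbsAux.pert_iff ?_).2 (h1 n)
    intro f
    rw [neg_apply]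
    filter_upwards [hB n f, Lp.coeFn_neg (B n f)] with ω h h'
    rw [h', Pi.neg_apply, h, ← neg_mul]
    rfl
  · classical
    let q : EReal → ℝ := fun x => if x = ⊥ then 1 else 0
    have hq : Measurable q :=
      Measurable.ite (measurableSet_singleton _) measurable_const measurable_const
    have hq01 : ∀ x, 0 ≤ q x ∧ q x ≤ 1 := by
      intro x
      simp only [q]
      split_ifs <;> norm_num
    obtain ⟨Q, hQ⟩ := AbsAux.mul_exists (p := p) hp (AbsAux.lm_comp hVm hq) 1
      (fun ω => by rw [abs_of_nonneg (hq01 _).1]; exact (hq01 _).2)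
    have hz := AbsAux.core_null hT hTpos B hB0 U hU' UV hUV Q
      (by
        intro f hf
        rw [← Lp.coeFn_nonneg] at hf ⊢
        filter_upwards [hf, hQ f] with ω h1 h2
        rw [h2]
        exact mul_nonneg (hq01 _).1 h1)
      (by
        intro n f hf
        rw [← Lp.coeFn_nonneg] at hf
        rw [← Lp.coeFn_le]
        filter_upwards [hf, hQ f, hB n f, Lp.coeFn_smul (n : ℝ) (Q f)] with ω h1 h2 h3 h4
        rw [h4, Pi.smul_apply, h2, h3, smul_eq_mul, ← mul_assoc]
        refine mul_le_mul_of_nonneg_right ?_ h1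
        simp only [q]
        split_ifs with h
        · rw [h, EReal.neg_bot, AbsAux.tau_top, mul_one]
        · rw [mul_zero]; exact (hb n ω).1)
    intro C hC hμC
    have hf0 : 0 ≤ indicatorConstLp p hC hμC.ne (1 : ℝ) := by
      rw [← Lp.coeFn_nonneg]
      filter_upwards [indicatorConstLp_coeFn (p := p) (hs := hC) (hμs := hμC.ne) (c := (1 : ℝ))]
        with ω h
      rw [h]
      exact Set.indicator_nonneg (fun _ _ => zero_le_one) ω
    have h0 := hz _ hf0
    have hae : ∀ᵐ ω ∂μ, ω ∉ {ω | V ω = ⊥} ∩ C := by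
      have h1 := hQ (indicatorConstLp p hC hμC.ne (1 : ℝ))
      rw [h0] at h1
      filter_upwards [h1, Lp.coeFn_zero ℝ p μ,
        indicatorConstLp_coeFn (p := p) (hs := hC) (hμs := hμC.ne) (c := (1 : ℝ))]
        with ω e1 e2 e3
      rintro ⟨hv, hc⟩
      have hv' : V ω = ⊥ := hv
      rw [e2, e3, Set.indicator_of_mem hc] at e1
      simp [q, hv'] at e1
    exact measure_eq_zero_iff_ae_notMem.2 hae
end
end

section
/- Let (Ω, 𝒜, μ) be a measure space, p ∈ [1,∞), and T a positive C₀-semigroup on L_p(μ) with generator A. For every locally measurable V : Ω → [0,∞], the strong limit T_V(t) := s-lim_{n→∞} e^{t(A − V∧n)} exists for every t ≥ 0 (since the sequence of positive operators e^{t(A − V∧n)} is decreasing in n and bounded below by 0), and the family (T_V(t))_{t≥0} thus defined is a one-parameter semigroup: T_V(0) = I and T_V(s+t) = T_V(s)T_V(t) for all s, t ≥ 0. -/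
open MeasureTheory Filter Topology ENNReal

noncomputable section

namespace Absorption
section Abstract
variable {E : Type*} [NormedAddCommGroup E] [NormedSpace ℝ E]

lemma local_bound [CompleteSpace E] {T : ℝ → E →L[ℝ] E} (hT : IsC0Semigroup T) (b : ℝ) :
    ∃ M, 0 ≤ M ∧ ∀ t, 0 ≤ t → t ≤ b → ‖T t‖ ≤ M := by
  have h : ∀ x : E, ∃ C, ∀ i : Set.Icc (0 : ℝ) b, ‖T i x‖ ≤ C := by
    intro x
    obtain ⟨C, hC⟩ := (isCompact_Icc (a := (0 : ℝ)) (b := b)).exists_bound_of_continuousOn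
      ((hT.2 x).mono Set.Icc_subset_Ici_self)
    exact ⟨C, fun i => hC i i.2⟩
  obtain ⟨C, hC⟩ := banach_steinhaus h
  exact ⟨max C 0, le_max_right _ _, fun t h0 hb => (hC ⟨t, h0, hb⟩).trans (le_max_left _ _)⟩

lemma joint_cont [CompleteSpace E] {T : ℝ → E →L[ℝ] E} (hT : IsC0Semigroup T) :
    Continuous (fun q : ℝ × E => T (max q.1 0) q.2) := by
  rw [continuous_iff_continuousAt]
  rintro ⟨a, x⟩
  obtain ⟨M, hM0, hM⟩ := local_bound hT (max (a + 1) 0)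
  have h1 : Continuous (fun t : ℝ => T (max t 0) x) :=
    (hT.2 x).comp_continuous (by fun_prop) (fun t => Set.mem_Ici.2 (le_max_right _ _))
  have h2 : Tendsto (fun q : ℝ × E => T (max q.1 0) (q.2 - x)) (𝓝 (a, x)) (𝓝 0) := by
    have h3 : Tendsto (fun q : ℝ × E => M * ‖q.2 - x‖) (𝓝 (a, x)) (𝓝 0) := by
      have : Continuous (fun q : ℝ × E => M * ‖q.2 - x‖) := by fun_prop
      simpa using this.tendsto (a, x)
    refine squeeze_zero_norm' ?_ h3
    have : ∀ᶠ q : ℝ × E in 𝓝 (a, x), q.1 < a + 1 :=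
      (continuous_fst.tendsto (a, x)).eventually (gt_mem_nhds (by simp))
    filter_upwards [this] with q hq
    exact (T _).le_of_opNorm_le (hM _ (le_max_right _ _) (max_le_max hq.le le_rfl)) _
  have h4 : Tendsto (fun q : ℝ × E => T (max q.1 0) x) (𝓝 (a, x)) (𝓝 (T (max a 0) x)) :=
    (h1.comp continuous_fst).tendsto (a, x)
  have := h2.add h4
  simpa [ContinuousAt] using this

lemma cont_orbit [CompleteSpace E] {T : ℝ → E →L[ℝ] E} (hT : IsC0Semigroup T) (f : E) :
    Continuous (fun t : ℝ => T (max t 0) f) :=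
  (joint_cont hT).comp (by fun_prop : Continuous fun t : ℝ => (t, f))

lemma gen_orbit {T : ℝ → E →L[ℝ] E} (hT : IsSemigroup T) {f g : E} (h : InGenerator T f g)
    {s : ℝ} (hs : 0 ≤ s) : InGenerator T (T s f) (T s g) := by
  have := ((T s).continuous.tendsto g).comp h
  refine this.congr' ?_
  filter_upwards [self_mem_nhdsWithin] with t (ht : 0 < t)
  have : T t (T s f) = T s (T t f) := by
    rw [← ContinuousLinearMap.comp_apply, ← ContinuousLinearMap.comp_apply, ← hT.2 _ _ ht.le hs,
      ← hT.2 _ _ hs ht.le, add_comm]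
  simp [this]

lemma dense_gen [CompleteSpace E] {T : ℝ → E →L[ℝ] E} (hT : IsC0Semigroup T) :
    Dense {f : E | ∃ g, InGenerator T f g} := by
  intro f
  set F : ℝ → E := fun x => ∫ s in (0 : ℝ)..x, T (max s 0) f with hF
  have hc := cont_orbit hT f
  have hd : ∀ x, HasDerivAt F (T (max x 0) f) x := fun x =>
    intervalIntegral.integral_hasDerivAt_right (hc.intervalIntegrable _ _)
      hc.aestronglyMeasurable.stronglyMeasurableAtFilter hc.continuousAt
  have h0 : Tendsto (fun r : ℝ => r⁻¹ • F r) (𝓝[>] 0) (𝓝 f) := by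
    have := (hd 0).tendsto_slope_zero_right
    simpa [hF, hT.1.1] using this
  have hmem : ∀ h : ℝ, 0 < h → InGenerator T (F h) (T h f - f) := by
    intro h hh
    have h1 := (hd h).tendsto_slope_zero_right.sub h0
    rw [max_eq_left hh.le] at h1
    refine h1.congr' ?_
    filter_upwards [self_mem_nhdsWithin] with r (hr : 0 < r)
    have h2 : T r (F h) = F (h + r) - F r := by
      have e1 : T r (F h) = ∫ s in (0 : ℝ)..h, T r (T (max s 0) f) :=
        ((T r).intervalIntegral_comp_comm (hc.intervalIntegrable _ _)).symm
      have e2 : ∫ s in (0 : ℝ)..h, T r (T (max s 0) f) = ∫ s in (0 : ℝ)..h, T (max (s + r) 0) f := by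
        apply intervalIntegral.integral_congr
        intro s hs
        rw [Set.uIcc_of_le hh.le] at hs
        simp only
        rw [max_eq_left hs.1, max_eq_left (by linarith [hs.1]), add_comm, hT.1.2 _ _ hr.le hs.1]
        rfl
      have e3 : ∫ s in (0 : ℝ)..h, T (max (s + r) 0) f = ∫ s in (0+r)..(h+r), T (max s 0) f :=
        intervalIntegral.integral_comp_add_right (fun s => T (max s 0) f) r
      rw [e1, e2, e3, zero_add, hF,
        intervalIntegral.integral_interval_sub_left (hc.intervalIntegrable _ _)
          (hc.intervalIntegrable _ _)]
    rw [h2, ← smul_sub]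
    congr 1
    abel
  refine mem_closure_of_tendsto h0 ?_
  filter_upwards [self_mem_nhdsWithin] with r (hr : 0 < r)
  refine ⟨r⁻¹ • (T r f - f), ?_⟩
  have := (hmem r hr).const_smul r⁻¹
  refine this.congr fun t => ?_
  rw [map_smul, ← smul_sub, smul_comm]

lemma duhamel [CompleteSpace E] {T₁ T₂ : ℝ → E →L[ℝ] E} (h₁ : IsC0Semigroup T₁)
    (h₂ : IsC0Semigroup T₂) (K : E →L[ℝ] E)
    (hK : ∀ f g, InGenerator T₂ f g → InGenerator T₁ f (g - K f)) {t : ℝ} (ht : 0 ≤ t) (f : E) :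
    T₂ t f - T₁ t f = ∫ s in (0 : ℝ)..t, T₁ (max (t - s) 0) (K (T₂ (max s 0) f)) := by
  have j1 := joint_cont h₁
  have j2 := joint_cont h₂
  have jc : Continuous (fun q : E × ℝ => T₁ (max (t - q.2) 0) (K (T₂ (max q.2 0) q.1))) := by
    have a : Continuous (fun q : E × ℝ => T₂ (max q.2 0) q.1) := j2.comp continuous_swap
    exact j1.comp ((by fun_prop : Continuous fun q : E × ℝ => t - q.2).prodMk (K.continuous.comp a))
  have cl : Continuous fun f : E => T₂ t f - T₁ t f := by fun_prop
  have cr : Continuous fun f : E => ∫ s in (0 : ℝ)..t, T₁ (max (t - s) 0) (K (T₂ (max s 0) f)) :=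
    intervalIntegral.continuous_parametric_intervalIntegral_of_continuous'
      (f := fun f s => T₁ (max (t - s) 0) (K (T₂ (max s 0) f))) jc 0 t
  refine congrFun (Continuous.ext_on (dense_gen h₂) cl cr ?_) f
  rintro f ⟨f', hf⟩
  have jcf : ∀ f, Continuous (fun s : ℝ => T₁ (max (t - s) 0) (K (T₂ (max s 0) f))) :=
    fun f => jc.comp (by fun_prop : Continuous fun s : ℝ => (f, s))
  have hD : Continuous (fun s : ℝ => T₁ (max (t - s) 0) (T₂ (max s 0) f)) :=
    j1.comp ((by fun_prop : Continuous fun s : ℝ => t - s).prodMk (cont_orbit h₂ f))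
  have := intervalIntegral.integral_eq_sub_of_hasDeriv_right_of_le ht hD.continuousOn
    (f' := fun s => T₁ (max (t - s) 0) (K (T₂ (max s 0) f))) ?_ ((jcf f).intervalIntegrable _ _)
  · simp only
    rw [this]
    simp [h₁.1.1, h₂.1.1, ht]
  intro s hs
  rw [hasDerivWithinAt_iff_tendsto_slope' (by simp)]
  have hs0 : 0 ≤ s := hs.1.le
  set g := T₂ s f with hg
  have g2 := gen_orbit h₂.1 hf hs0
  have g1 := hK _ _ g2
  have key : Tendsto (fun r : ℝ => r⁻¹ • (T₂ r g - g) - r⁻¹ • (T₁ r g - g)) (𝓝[>] 0) (𝓝 (K g)) := by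
    have := Tendsto.sub g2 g1
    simpa using this
  have sh : Tendsto (fun y : ℝ => y - s) (𝓝[>] s) (𝓝[>] 0) := by
    refine tendsto_nhdsWithin_iff.2 ⟨?_, ?_⟩
    · have : Continuous fun y : ℝ => y - s := by fun_prop
      have := this.tendsto s
      rw [sub_self] at this
      exact this.mono_left nhdsWithin_le_nhds
    · filter_upwards [self_mem_nhdsWithin] with y (hy : s < y)
      exact sub_pos.2 hy
  have key2 := key.comp sh
  have ts : Tendsto (fun y : ℝ => t - y) (𝓝[>] s) (𝓝 (t - s)) :=
    ((by fun_prop : Continuous fun y : ℝ => t - y).tendsto s).mono_left nhdsWithin_le_nhds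
  have key3 := (j1.tendsto (t - s, K g)).comp (ts.prodMk_nhds key2)
  simp only [max_eq_left hs0]
  refine key3.congr' ?_
  filter_upwards [Ioo_mem_nhdsGT hs.2] with y hy
  have hty : 0 ≤ t - y := by linarith [hy.2]
  have hts : 0 ≤ t - s := by linarith [hs.2]
  have hys : 0 ≤ y - s := by linarith [hy.1]
  have e1 : T₂ y f = T₂ (y - s) g := by
    rw [hg, ← ContinuousLinearMap.comp_apply, ← h₂.1.2 _ _ hys hs0]; congr 2; ring
  have e2 : T₁ (t - s) g = T₁ (t - y) (T₁ (y - s) g) := by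
    have e3 := h₁.1.2 _ _ hty hys
    rw [show t - y + (y - s) = t - s by ring] at e3
    rw [e3]; rfl
  simp only [Function.comp, slope_def_module, max_eq_left hty, max_eq_left hts,
    max_eq_left (hs0.trans hy.1.le), max_eq_left hs0]
  rw [e1, ← hg, e2, ← smul_sub, map_smul, ← map_sub]
  congr 2
  abel

end Abstract

section Order
set_option linter.unusedSectionVars false
variable {E : Type*} [NormedAddCommGroup E] [NormedSpace ℝ E] [CompleteSpace E]
  [Lattice E] [HasSolidNorm E] [IsOrderedAddMonoid E] [IsOrderedModule ℝ E] [OrderClosedTopology E]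

lemma integral_nonneg_Icc {u : ℝ → E} {t : ℝ} (ht : 0 ≤ t) (h : ∀ s, 0 ≤ s → s ≤ t → 0 ≤ u s) :
    0 ≤ ∫ s in (0 : ℝ)..t, u s := by
  rw [intervalIntegral.integral_of_le ht]
  apply integral_nonneg_of_ae
  filter_upwards [ae_restrict_mem measurableSet_Ioc] with s hs
  exact h s hs.1.le hs.2

lemma positivity_aux {T₁ T₂ : ℝ → E →L[ℝ] E} (h₁ : IsC0Semigroup T₁)
    (h₂ : IsC0Semigroup T₂) (K : E →L[ℝ] E)
    (hK : ∀ f g, InGenerator T₂ f g → InGenerator T₁ f (g - K f))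
    (hKpos : ∀ f, 0 ≤ f → 0 ≤ K f)
    (hpos : ∀ t, 0 ≤ t → ∀ f, 0 ≤ f → 0 ≤ T₁ t f) {f : E} (hf : 0 ≤ f) :
    ∀ t, 0 ≤ t → 0 ≤ T₂ t f := by
  intro b hb
  obtain ⟨M, hM0, hM⟩ := local_bound h₁ b
  set v : ℝ → E := fun s => (-(T₂ (max s 0) f)) ⊔ 0 with hv
  have hvc : Continuous v := (cont_orbit h₂ f).neg.sup continuous_const
  have hv0 : ∀ s, 0 ≤ v s := fun s => le_sup_right
  have hvn : ∀ s, -(v s) ≤ T₂ (max s 0) f := fun s => neg_le.1 le_sup_left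
  have j1 := joint_cont h₁
  have c1 : ∀ t : ℝ, ∀ w : ℝ → E, Continuous w →
      Continuous fun s => T₁ (max (t - s) 0) (K (w s)) := fun t w hw =>
    j1.comp ((by fun_prop : Continuous fun s : ℝ => t - s).prodMk (K.continuous.comp hw))
  set φ : ℝ → ℝ := fun s => ‖v s‖ with hφ
  have hφc : Continuous φ := hvc.norm
  set Φ : ℝ → ℝ := fun x => ∫ s in (0 : ℝ)..x, φ s with hΦ
  have hd : ∀ x, HasDerivAt Φ (φ x) x := fun x =>
    intervalIntegral.integral_hasDerivAt_right (hφc.intervalIntegrable _ _)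
      hφc.aestronglyMeasurable.stronglyMeasurableAtFilter hφc.continuousAt
  have hΦ0 : ∀ x, 0 ≤ x → 0 ≤ Φ x := fun x hx =>
    intervalIntegral.integral_nonneg hx fun _ _ => norm_nonneg _
  have bound : ∀ t, 0 ≤ t → t ≤ b → φ t ≤ M * ‖K‖ * Φ t := by
    intro t ht htb
    set w := ∫ s in (0 : ℝ)..t, T₁ (max (t - s) 0) (K (v s)) with hw
    have hw0 : 0 ≤ w := integral_nonneg_Icc ht fun s _ _ =>
      hpos _ (le_max_right _ _) _ (hKpos _ (hv0 s))
    have hge : -w ≤ T₂ t f := by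
      have e := duhamel h₁ h₂ K hK ht f
      have e2 : 0 ≤ (∫ s in (0 : ℝ)..t, T₁ (max (t - s) 0) (K (T₂ (max s 0) f))) + w := by
        rw [hw, ← intervalIntegral.integral_add
          ((c1 t _ (cont_orbit h₂ f)).intervalIntegrable _ _)
          ((c1 t _ hvc).intervalIntegrable _ _)]
        refine integral_nonneg_Icc ht fun s _ _ => ?_
        rw [← map_add, ← map_add]
        exact hpos _ (le_max_right _ _) _ (hKpos _ (neg_le_iff_add_nonneg.1 (hvn s)))
      rw [← e] at e2
      have e3 := add_nonneg e2 (hpos t ht f hf)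
      rw [neg_le_iff_add_nonneg]
      convert e3 using 1
      abel
    have hvw : v t ≤ w := by
      simp only [hv, max_eq_left ht]
      exact sup_le (neg_le.1 hge) hw0
    have : ‖v t‖ ≤ ‖w‖ := by
      apply norm_le_norm_of_abs_le_abs
      rwa [abs_of_nonneg (hv0 t), abs_of_nonneg hw0]
    refine this.trans ?_
    rw [hΦ, ← intervalIntegral.integral_const_mul]
    refine intervalIntegral.norm_integral_le_of_norm_le ht ?_
      ((hφc.const_mul _).intervalIntegrable _ _)
    refine ae_of_all _ fun s hs => ?_
    rw [mul_assoc]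
    refine (T₁ _).le_of_opNorm_le_of_le (hM _ (le_max_right _ _) ?_) (K.le_opNorm _)
    exact max_le (by linarith [hs.1]) hb
  have hz := eq_zero_of_abs_deriv_le_mul_abs_self_of_eq_zero_right (f := Φ) (f' := φ)
    (K := M * ‖K‖) (a := 0) (b := b) (fun x _ => (hd x).continuousAt.continuousWithinAt)
    (fun x _ => (hd x).hasDerivWithinAt) (by simp [hΦ]) (fun x hx => by
      rw [Real.norm_of_nonneg (norm_nonneg _), Real.norm_of_nonneg (hΦ0 x hx.1)]
      exact bound x hx.1 hx.2.le) b ⟨hb, le_rfl⟩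
  have := bound b hb le_rfl
  rw [hz, mul_zero] at this
  have hvb : v b = 0 := norm_le_zero_iff.1 this
  have := hvn b
  rwa [hvb, neg_zero, max_eq_left hb] at this

lemma gen_scale {T : ℝ → E →L[ℝ] E} (c : ℝ) {f g : E} (h : InGenerator T f g) :
    InGenerator (fun t => Real.exp (-c * t) • T t) f (g - c • f) := by
  have d : HasDerivAt (fun t : ℝ => Real.exp (-c * t)) (-c) 0 := by
    have := ((hasDerivAt_id (0 : ℝ)).const_mul (-c)).exp
    simpa using this
  have d1 := d.tendsto_slope_zero_right
  have d2 : Tendsto (fun t : ℝ => Real.exp (-c * t)) (𝓝[>] 0) (𝓝 1) := by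
    have : Continuous (fun t : ℝ => Real.exp (-c * t)) := by fun_prop
    have := this.tendsto 0
    simp only [mul_zero, Real.exp_zero] at this
    exact this.mono_left nhdsWithin_le_nhds
  have := (d2.smul h).add (d1.smul_const f)
  have e : (1 : ℝ) • g + (-c) • f = g - c • f := by rw [one_smul, neg_smul, sub_eq_add_neg]
  rw [e] at this
  refine this.congr fun t => ?_
  simp only [zero_add, mul_zero, Real.exp_zero, smul_eq_mul, smul_apply]
  module

lemma c0_scale {T : ℝ → E →L[ℝ] E} (c : ℝ) (h : IsC0Semigroup T) :
    IsC0Semigroup (fun t => Real.exp (-c * t) • T t) := by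
  refine ⟨⟨by simp [h.1.1], fun s t hs ht => ?_⟩, fun f => ?_⟩
  · ext x
    simp [h.1.2 s t hs ht, mul_add, Real.exp_add, smul_smul, mul_comm]
  · have : Continuous (fun t : ℝ => Real.exp (-c * t)) := by fun_prop
    exact this.continuousOn.smul (h.2 f)

/-- perturbation by a bounded positive operator dominated by `c`. -/
lemma perturb_pos {U U' : ℝ → E →L[ℝ] E} (h : IsC0Semigroup U) (h' : IsC0Semigroup U')
    (hpos : ∀ t, 0 ≤ t → ∀ f, 0 ≤ f → 0 ≤ U t f) (B : E →L[ℝ] E) (c : ℝ)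
    (hBc : ∀ f, 0 ≤ f → B f ≤ c • f)
    (hB : ∀ f g, InGenerator U' f g → InGenerator U f (g + B f)) :
    ∀ t, 0 ≤ t → ∀ f, 0 ≤ f → 0 ≤ U' t f := by
  intro t ht f hf
  refine positivity_aux (c0_scale c h) h' (c • ContinuousLinearMap.id ℝ E - B) ?_ ?_ ?_ hf t ht
  · intro f g hg
    have := gen_scale c (hB f g hg)
    convert this using 1
    simp
    abel
  · intro f hf
    simpa using hBc f hf
  · intro t ht f hf
    exact smul_nonneg (Real.exp_pos _).le (hpos t ht f hf)

lemma perturb_le {U U' : ℝ → E →L[ℝ] E} (h : IsC0Semigroup U) (h' : IsC0Semigroup U')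
    (hpos : ∀ t, 0 ≤ t → ∀ f, 0 ≤ f → 0 ≤ U t f)
    (hpos' : ∀ t, 0 ≤ t → ∀ f, 0 ≤ f → 0 ≤ U' t f) (B : E →L[ℝ] E)
    (hB0 : ∀ f, 0 ≤ f → 0 ≤ B f)
    (hB : ∀ f g, InGenerator U f g → InGenerator U' f (g - B f)) :
    ∀ t, 0 ≤ t → ∀ f, 0 ≤ f → U' t f ≤ U t f := by
  intro t ht f hf
  rw [← sub_nonneg, duhamel h' h B hB ht f]
  exact integral_nonneg_Icc ht fun s _ _ =>
    hpos' _ (le_max_right _ _) _ (hB0 _ (hpos _ (le_max_right _ _) _ hf))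

end Order

section LpPart
variable {Ω : Type*} [MeasurableSpace Ω] {μ : Measure Ω} {p : ℝ≥0∞} [Fact (1 ≤ p)]

lemma lp_smul_nonneg {c : ℝ} (hc : 0 ≤ c) {f : Lp ℝ p μ} (hf : 0 ≤ f) : 0 ≤ c • f := by
  rw [← Lp.coeFn_nonneg] at hf ⊢
  filter_upwards [hf, Lp.coeFn_smul c f] with x hx h
  rw [h]
  exact mul_nonneg hc hx

instance lpOrderedModule : IsOrderedModule ℝ (Lp ℝ p μ) := IsOrderedModule.of_smul_nonneg
  fun _ hc _ hf => lp_smul_nonneg hc hf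

lemma aesm_trunc_mul (hp : p ≠ ∞) {V : Ω → ℝ≥0∞} (hV : LocallyMeasurable μ V) (n : ℕ)
    (f : Lp ℝ p μ) : AEStronglyMeasurable (fun ω => trunc V n ω * f ω) μ := by
  have hp0 : p ≠ 0 := (lt_of_lt_of_le one_pos (Fact.out : 1 ≤ p)).ne'
  set B : ℕ → Set Ω := fun k => {ω | (1 : ℝ) / (k + 1) ≤ ‖f ω‖} with hB
  have hBm : ∀ k, MeasurableSet (B k) := fun k =>
    measurableSet_le measurable_const (Lp.stronglyMeasurable f).norm.measurable
  have hBf : ∀ k, μ (B k) < ∞ := by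
    intro k
    have hk : (0 : ℝ) < 1 / (k + 1) := by positivity
    have := meas_ge_le_mul_pow_eLpNorm_enorm μ hp0 hp (Lp.aestronglyMeasurable f)
      (ε := ENNReal.ofReal (1 / (k + 1))) (by simpa using hk) (by simp)
    have hs : B k ⊆ {x | ENNReal.ofReal (1 / (k + 1)) ≤ ‖f x‖ₑ} := by
      intro x hx
      rw [Set.mem_setOf_eq, ← ofReal_norm_eq_enorm]
      exact ENNReal.ofReal_le_ofReal hx
    refine (measure_mono hs).trans_lt (this.trans_lt ?_)
    refine ENNReal.mul_lt_top ?_ ?_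
    · refine ENNReal.rpow_lt_top_of_nonneg ENNReal.toReal_nonneg ?_
      rw [Ne, ENNReal.inv_eq_top]
      simpa using hk
    · exact ENNReal.rpow_lt_top_of_nonneg ENNReal.toReal_nonneg (Lp.eLpNorm_ne_top f)
  have hind : (fun ω => trunc V n ω * f ω) =
      (⋃ k, B k).indicator (fun ω => trunc V n ω * f ω) := by
    ext ω
    by_cases h : ω ∈ ⋃ k, B k
    · rw [Set.indicator_of_mem h]
    · rw [Set.indicator_of_notMem h]
      have : f ω = 0 := by
        by_contra h0
        obtain ⟨k, hk⟩ := exists_nat_one_div_lt (norm_pos_iff.2 h0)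
        exact h (Set.mem_iUnion.2 ⟨k, hk.le⟩)
      rw [this, mul_zero]
  rw [hind, aestronglyMeasurable_indicator_iff (MeasurableSet.iUnion hBm),
    aestronglyMeasurable_iUnion_iff]
  intro k
  obtain ⟨g, hg, hVg⟩ := hV (B k) (hBm k) (hBf k)
  refine AEStronglyMeasurable.mul ?_ (Lp.aestronglyMeasurable f).restrict
  refine AEMeasurable.aestronglyMeasurable
    ⟨fun ω => (min (g ω) (n : ℝ≥0∞)).toReal, (hg.min measurable_const).ennreal_toReal, ?_⟩
  filter_upwards [hVg] with ω h
  rw [trunc, h]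

lemma trunc_nonneg (V : Ω → ℝ≥0∞) (n : ℕ) (ω : Ω) : 0 ≤ trunc V n ω := ENNReal.toReal_nonneg

lemma trunc_le (V : Ω → ℝ≥0∞) (n : ℕ) (ω : Ω) : trunc V n ω ≤ n := by
  have := ENNReal.toReal_mono (ENNReal.natCast_ne_top n) (min_le_right (V ω) (n : ℝ≥0∞))
  simpa [trunc] using this

lemma trunc_succ (V : Ω → ℝ≥0∞) (n : ℕ) (ω : Ω) : trunc V n ω ≤ trunc V (n + 1) ω := by
  refine ENNReal.toReal_mono (ne_top_of_le_ne_top (ENNReal.natCast_ne_top (n+1))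
    (min_le_right _ _)) (min_le_min le_rfl ?_)
  exact_mod_cast Nat.le_succ n

lemma exists_mulOp {W : Ω → ℝ} {c : ℝ}
    (hm : ∀ f : Lp ℝ p μ, AEStronglyMeasurable (fun ω => W ω * f ω) μ)
    (hc : ∀ ω, ‖W ω‖ ≤ c) :
    ∃ B : Lp ℝ p μ →L[ℝ] Lp ℝ p μ, ∀ f, ⇑(B f) =ᵐ[μ] fun ω => W ω * f ω := by
  have hb : ∀ f : Lp ℝ p μ, ∀ ω, ‖W ω * f ω‖ ≤ c * ‖f ω‖ := fun f ω => by
    rw [norm_mul]; exact mul_le_mul_of_nonneg_right (hc ω) (norm_nonneg _)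
  have hL : ∀ f : Lp ℝ p μ, MemLp (fun ω => W ω * f ω) p μ := fun f =>
    (Lp.memLp f).of_le_mul (hm f) (ae_of_all _ (hb f))
  let L : Lp ℝ p μ →ₗ[ℝ] Lp ℝ p μ :=
    { toFun := fun f => (hL f).toLp _
      map_add' := fun f g => by
        apply Lp.ext
        filter_upwards [(hL (f + g)).coeFn_toLp, (hL f).coeFn_toLp, (hL g).coeFn_toLp,
          Lp.coeFn_add f g, Lp.coeFn_add ((hL f).toLp _) ((hL g).toLp _)] with x h1 h2 h3 h4 h5
        rw [h1, h5, Pi.add_apply, h2, h3, h4, Pi.add_apply, mul_add]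
      map_smul' := fun a f => by
        apply Lp.ext
        filter_upwards [(hL (a • f)).coeFn_toLp, (hL f).coeFn_toLp,
          Lp.coeFn_smul a f, Lp.coeFn_smul a ((hL f).toLp _)] with x h1 h2 h4 h5
        rw [h1, RingHom.id_apply, h5, Pi.smul_apply, h2, h4, Pi.smul_apply, smul_eq_mul,
          smul_eq_mul]
        ring }
  refine ⟨L.mkContinuous c fun f => ?_, fun f => (hL f).coeFn_toLp⟩
  refine Lp.norm_le_mul_norm_of_ae_le_mul ?_
  filter_upwards [(hL f).coeFn_toLp] with x h1
  change ‖(hL f).toLp _ x‖ ≤ _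
  rw [h1]
  exact hb f x

lemma norm_rpow_add_le (hp : p ≠ ∞) {a b : Lp ℝ p μ} (ha : 0 ≤ a) (hab : a ≤ b) :
    ‖b - a‖ ^ p.toReal + ‖a‖ ^ p.toReal ≤ ‖b‖ ^ p.toReal := by
  have hp1 : 1 ≤ p := Fact.out
  have hp0 : p ≠ 0 := (lt_of_lt_of_le one_pos hp1).ne'
  have hq : 1 ≤ p.toReal := by
    simpa using ENNReal.toReal_mono hp hp1
  have hq0 : 0 < p.toReal := one_pos.trans_le hq
  have hn : ∀ f : Lp ℝ p μ, ‖f‖ₑ ^ p.toReal = ∫⁻ x, ‖f x‖ₑ ^ p.toReal ∂μ := by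
    intro f
    rw [Lp.enorm_def, eLpNorm_eq_lintegral_rpow_enorm_toReal hp0 hp, ← ENNReal.rpow_mul,
      one_div_mul_cancel hq0.ne', ENNReal.rpow_one]
  have key : ‖b - a‖ₑ ^ p.toReal + ‖a‖ₑ ^ p.toReal ≤ ‖b‖ₑ ^ p.toReal := by
    rw [hn, hn, hn, ← lintegral_add_left' ((Lp.aestronglyMeasurable (b - a)).enorm.pow_const _)]
    refine lintegral_mono_ae ?_
    rw [← Lp.coeFn_nonneg] at ha
    rw [← Lp.coeFn_le] at hab
    filter_upwards [ha, hab, Lp.coeFn_sub b a] with x h1 h2 h3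
    refine (ENNReal.add_rpow_le_rpow_add _ _ hq).trans ?_
    refine ENNReal.rpow_le_rpow ?_ hq0.le
    have h1 : 0 ≤ a x := h1
    rw [h3, Pi.sub_apply, Real.enorm_of_nonneg (sub_nonneg.2 h2), Real.enorm_of_nonneg h1,
      Real.enorm_of_nonneg (h1.trans h2), ← ENNReal.ofReal_add (sub_nonneg.2 h2) h1,
      sub_add_cancel]
  simp only [← ofReal_norm_eq_enorm] at key
  rw [ENNReal.ofReal_rpow_of_nonneg (norm_nonneg _) hq0.le,
    ENNReal.ofReal_rpow_of_nonneg (norm_nonneg _) hq0.le,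
    ENNReal.ofReal_rpow_of_nonneg (norm_nonneg _) hq0.le,
    ← ENNReal.ofReal_add (by positivity) (by positivity),
    ENNReal.ofReal_le_ofReal_iff (by positivity)] at key
  exact key

lemma antitone_conv (hp : p ≠ ∞) {u : ℕ → Lp ℝ p μ} (hu : Antitone u) (h0 : ∀ n, 0 ≤ u n) :
    ∃ l, Tendsto u atTop (𝓝 l) := by
  have hp1 : 1 ≤ p := Fact.out
  have hq : 1 ≤ p.toReal := by
    simpa using ENNReal.toReal_mono hp hp1
  have hq0 : 0 < p.toReal := one_pos.trans_le hq
  set α : ℕ → ℝ := fun n => ‖u n‖ ^ p.toReal with hα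
  have hle : ∀ n m, n ≤ m → ‖u n - u m‖ ^ p.toReal + α m ≤ α n := fun n m h =>
    norm_rpow_add_le hp (h0 m) (hu h)
  have hanti : Antitone α := fun n m h => by
    have h1 := hle n m h
    have h2 : 0 ≤ ‖u n - u m‖ ^ p.toReal := by positivity
    linarith
  have hbdd : BddBelow (Set.range α) := ⟨0, by rintro _ ⟨n, rfl⟩; simp only [hα]; positivity⟩
  have hcs : CauchySeq α := (tendsto_atTop_ciInf hanti hbdd).cauchySeq
  refine cauchySeq_tendsto_of_complete (Metric.cauchySeq_iff'.2 fun ε hε => ?_)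
  obtain ⟨N, hN⟩ := Metric.cauchySeq_iff'.1 hcs (ε ^ p.toReal) (by positivity)
  refine ⟨N, fun m hm => ?_⟩
  have h1 := hN m hm
  have h2 := hle N m hm
  rw [dist_comm, Real.dist_eq] at h1
  have h3 := (le_abs_self _).trans_lt h1
  rw [dist_comm, dist_eq_norm]
  have h4 : ‖u N - u m‖ ^ p.toReal < ε ^ p.toReal := by linarith
  exact lt_of_not_ge fun h => absurd (Real.rpow_le_rpow hε.le h hq0.le) (not_le.2 h4)

end LpPart
end Absorption
open Absorption
/-- For every locally measurable `V : Ω → [0,∞]`, the strong limit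
`T_V(t) = s-lim_{n→∞} e^{t(A−V∧n)}` exists for every `t ≥ 0`, and `(T_V(t))_{t≥0}` is a
one-parameter semigroup: `T_V(0) = I` and `T_V(s+t) = T_V(s)T_V(t)` for `s, t ≥ 0`. -/
theorem statement10
    {Ω : Type*} [MeasurableSpace Ω] (μ : Measure Ω) (p : ℝ≥0∞) [Fact (1 ≤ p)] (hp : p ≠ ∞)
    (T : ℝ → Lp ℝ p μ →L[ℝ] Lp ℝ p μ)
    (hT : IsC0Semigroup T) (hTpos : IsPositiveSG T)
    (V : Ω → ℝ≥0∞) (hVmeas : LocallyMeasurable μ V)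
    -- the perturbed semigroups `e^{t(A − V∧n)}`
    (S : ℕ → ℝ → Lp ℝ p μ →L[ℝ] Lp ℝ p μ)
    (hS : ∀ n : ℕ, IsPerturbedSG μ p T (S n) (trunc V n)) :
    ∃ TV : ℝ → Lp ℝ p μ →L[ℝ] Lp ℝ p μ,
      -- the strong limit exists for every `t ≥ 0` …
      (∀ t : ℝ, 0 ≤ t → ∀ f : Lp ℝ p μ,
        Tendsto (fun n : ℕ => S n t f) atTop (𝓝 (TV t f))) ∧
      -- … and defines a one-parameter semigroup
      TV 0 = ContinuousLinearMap.id ℝ (Lp ℝ p μ) ∧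
      (∀ s t : ℝ, 0 ≤ s → 0 ≤ t → TV (s + t) = (TV s).comp (TV t)) := by
  have hB : ∀ n, ∃ B : Lp ℝ p μ →L[ℝ] Lp ℝ p μ, ∀ f, ⇑(B f) =ᵐ[μ] fun ω => trunc V n ω * f ω :=
    fun n => exists_mulOp (c := n) (aesm_trunc_mul hp hVmeas n) fun ω => by
      rw [Real.norm_of_nonneg (trunc_nonneg V n ω)]
      exact trunc_le V n ω
  choose B hB using hB
  have hgen : ∀ n f g, InGenerator (S n) f g ↔ InGenerator T f (g + B n f) := by
    intro n f g
    rw [(hS n).2 f g]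
    have : ∀ g₀ : Lp ℝ p μ, (⇑g =ᵐ[μ] fun ω => g₀ ω - trunc V n ω * f ω) ↔ g₀ = g + B n f := by
      intro g₀
      rw [← sub_eq_iff_eq_add, eq_comm, Lp.ext_iff]
      have : ⇑(g₀ - B n f) =ᵐ[μ] fun ω => g₀ ω - trunc V n ω * f ω := by
        filter_upwards [Lp.coeFn_sub g₀ (B n f), hB n f] with x h1 h2
        rw [h1, Pi.sub_apply, h2]
      exact ⟨fun h => h.trans this.symm, fun h => h.trans this⟩
    simp [this]
  have hpos : ∀ n t, 0 ≤ t → ∀ f, 0 ≤ f → 0 ≤ S n t f := by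
    intro n
    refine perturb_pos hT (hS n).1 hTpos (B n) n ?_ fun f g h => (hgen n f g).1 h
    intro f hf
    rw [← Lp.coeFn_nonneg] at hf
    rw [← Lp.coeFn_le]
    filter_upwards [hf, hB n f, Lp.coeFn_smul (n : ℝ) f] with x h1 h2 h3
    rw [h2, h3]
    exact mul_le_mul_of_nonneg_right (trunc_le V n x) h1
  have hle : ∀ n t, 0 ≤ t → ∀ f, 0 ≤ f → S (n + 1) t f ≤ S n t f := by
    intro n
    refine perturb_le (hS n).1 (hS (n + 1)).1 (hpos n) (hpos (n + 1)) (B (n + 1) - B n) ?_ ?_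
    · intro f hf
      rw [ContinuousLinearMap.sub_apply, sub_nonneg, ← Lp.coeFn_le]
      rw [← Lp.coeFn_nonneg] at hf
      filter_upwards [hf, hB n f, hB (n + 1) f] with x h1 h2 h3
      rw [h2, h3]
      exact mul_le_mul_of_nonneg_right (trunc_succ V n x) h1
    · intro f g h
      rw [hgen] at h ⊢
      convert h using 1
      rw [ContinuousLinearMap.sub_apply]
      abel
  have hex : ∀ t, 0 ≤ t → ∀ f, ∃ l, Tendsto (fun n => S n t f) atTop (𝓝 l) := by
    intro t ht f
    have hp' : ∀ f, 0 ≤ f → ∃ l, Tendsto (fun n => S n t f) atTop (𝓝 l) := fun f hf =>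
      antitone_conv hp (antitone_nat_of_succ_le fun n => hle n t ht f hf)
        fun n => hpos n t ht f hf
    obtain ⟨l₁, h₁⟩ := hp' f⁺ (posPart_nonneg f)
    obtain ⟨l₂, h₂⟩ := hp' f⁻ (negPart_nonneg f)
    refine ⟨l₁ - l₂, (h₁.sub h₂).congr fun n => ?_⟩
    rw [← map_sub, posPart_sub_negPart]
  have hop : ∀ t, ∃ L : Lp ℝ p μ →L[ℝ] Lp ℝ p μ, 0 ≤ t →
      ∀ f, Tendsto (fun n => S n t f) atTop (𝓝 (L f)) := by
    intro t
    by_cases ht : 0 ≤ t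
    · choose l hl using hex t ht
      exact ⟨continuousLinearMapOfTendsto (fun n => S n t) (tendsto_pi_nhds.2 hl), fun _ => hl⟩
    · exact ⟨0, fun h => absurd h ht⟩
  choose TV hTV using hop
  refine ⟨TV, hTV, ?_, ?_⟩
  · ext1 f
    refine tendsto_nhds_unique (hTV 0 le_rfl f) ?_
    simp [fun n => (hS n).1.1.1]
  · intro s t hs ht
    ext1 f
    refine tendsto_nhds_unique (hTV (s + t) (add_nonneg hs ht) f) ?_
    obtain ⟨C, hC⟩ := banach_steinhaus (g := fun n => S n s) fun x => by
      obtain ⟨C, hC⟩ := (hTV s hs x).norm.bddAbove_range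
      exact ⟨C, fun n => hC ⟨n, rfl⟩⟩
    have h1 : Tendsto (fun n => S n s (S n t f - TV t f)) atTop (𝓝 0) := by
      have h2 : Tendsto (fun n => C * ‖S n t f - TV t f‖) atTop (𝓝 0) := by
        have := ((hTV t ht f).sub_const (TV t f)).norm.const_mul C
        simpa using this
      exact squeeze_zero_norm (fun n => (S n s).le_of_opNorm_le (hC n) _) h2
    have h3 := h1.add (hTV s hs (TV t f))
    rw [zero_add] at h3
    refine h3.congr fun n => ?_
    rw [(hS n).1.1.2 s t hs ht, ← map_add, sub_add_cancel]
    rfl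
end
end
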